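/- arXiv:2503.06694 — 4 statements merged into one kernel-verified Lean document; each statement's English description precedes it below -/
import Mathlib

section
/- Let L = ⊕_{i∈ℤ} L_i be a nonzero ℤ-graded Lie conformal algebra that is perfect (i.e. [L_λ L] = L) and rootless. Then L is not of finite type. -/
open scoped BigOperators Classical ENNReal
open Polynomial

noncomputable section

/-- A Lie conformal algebra over `ℂ`, encoded via its `n`-th products
`a_(n) b` and the operator `∂ = D`.  The `λ`-bracket is
`[a_λ b] = ∑ₙ (λⁿ/n!) • (a_(n) b)`. -/
structure LieConformalAlgebra (L : Type) [AddCommGroup L] [Module ℂ L] : Type where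
  D : L →ₗ[ℂ] L
  prd : ℕ → L →ₗ[ℂ] L →ₗ[ℂ] L
  bound : ∀ a b : L, ∃ N : ℕ, ∀ n : ℕ, N ≤ n → prd n a b = 0
  sesq : ∀ (n : ℕ) (a b : L), prd n (D a) b = (-(n : ℂ)) • prd (n - 1) a b
  sesq' : ∀ (n : ℕ) (a b : L),
    prd n a (D b) = D (prd n a b) + (n : ℂ) • prd (n - 1) a b
  skew : ∀ (n : ℕ) (a b : L),
    prd n a b
      = - ∑ᶠ j : ℕ, ((-1 : ℂ) ^ (n + j) * ((Nat.factorial j : ℂ))⁻¹) • (⇑D)^[j] (prd (n + j) b a)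
  jacobi : ∀ (m n : ℕ) (a b c : L),
    prd m a (prd n b c) - prd n b (prd m a c)
      = ∑ j ∈ Finset.range (m + 1), (Nat.choose m j : ℂ) • prd (m + n - j) (prd j a b) c

namespace LieConformalAlgebra

variable {L : Type} [AddCommGroup L] [Module ℂ L]

/-- The action of a polynomial `q(∂) ∈ ℂ[∂]` on an element. -/
def applyP (C : LieConformalAlgebra L) (q : Polynomial ℂ) (x : L) : L :=
  q.sum fun k c => c • (⇑C.D)^[k] x

/-- `[a_λ b] = p(∂, λ) • t`, where `p ∈ ℂ[∂][λ]` is a two-variable polynomial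
(outer variable `λ`, inner variable `∂`). -/
def BracketEq (C : LieConformalAlgebra L) (a b t : L) (p : Polynomial (Polynomial ℂ)) : Prop :=
  ∀ n : ℕ, C.prd n a b = (Nat.factorial n : ℂ) • C.applyP (p.coeff n) t

def IsSubalgebra (C : LieConformalAlgebra L) (N : Submodule ℂ L) : Prop :=
  (∀ x ∈ N, C.D x ∈ N) ∧ ∀ n : ℕ, ∀ a ∈ N, ∀ b ∈ N, C.prd n a b ∈ N

def IsIdeal (C : LieConformalAlgebra L) (N : Submodule ℂ L) : Prop :=
  (∀ x ∈ N, C.D x ∈ N) ∧ ∀ (n : ℕ) (a : L), ∀ b ∈ N, C.prd n a b ∈ N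

/-- `L` is finitely generated as a Lie conformal algebra (finite type). -/
def FiniteType (C : LieConformalAlgebra L) : Prop :=
  ∃ s : Finset L, ∀ N : Submodule ℂ L, C.IsSubalgebra N → (s : Set L) ⊆ (N : Set L) → N = ⊤

/-- `L` is finitely generated as a `ℂ[∂]`-module. -/
def FGPolyModule (C : LieConformalAlgebra L) : Prop :=
  ∃ s : Finset L, ∀ N : Submodule ℂ L, (∀ x ∈ N, C.D x ∈ N) → (s : Set L) ⊆ (N : Set L) → N = ⊤

/-- Iterated adjoint action `a₁_(k₁)(a₂_(k₂)(⋯ x))`. -/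
def iterPrd (C : LieConformalAlgebra L) : List (L × ℕ) → L → L
  | [], x => x
  | (a, k) :: t, x => C.prd k a (iterPrd C t x)

/-- The `ℂ[∂]`-rank of the submodule `N` is at most `r`:
any `r+1` elements of `N` are `ℂ[∂]`-linearly dependent. -/
def polyRankLE (C : LieConformalAlgebra L) (N : Submodule ℂ L) (r : ℕ) : Prop :=
  ∀ v : Fin (r + 1) → L, (∀ k, v k ∈ N) →
    ∃ q : Fin (r + 1) → Polynomial ℂ, (∃ k, q k ≠ 0) ∧ ∑ k, C.applyP (q k) (v k) = 0

/-- The family `v` is a free `ℂ[∂]`-basis of `L`. -/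
def IsFreePolyBasis (C : LieConformalAlgebra L) {ι : Type} (v : ι → L) : Prop :=
  LinearIndependent ℂ (fun q : ι × ℕ => (⇑C.D)^[q.2] (v q.1)) ∧
  Submodule.span ℂ (Set.range fun q : ι × ℕ => (⇑C.D)^[q.2] (v q.1)) = ⊤

/-- `[U_λ V]`: the `ℂ`-span of all `u_(n) v`. -/
def bspan (C : LieConformalAlgebra L) (U V : Set L) : Submodule ℂ L :=
  Submodule.span ℂ {x : L | ∃ (n : ℕ) (u : L) (w : L), u ∈ U ∧ w ∈ V ∧ x = C.prd n u w}

end LieConformalAlgebra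

/-- `∂` as an element of `ℂ[∂][λ]`. -/
def Pd : Polynomial (Polynomial ℂ) := Polynomial.C Polynomial.X
/-- `λ` as an element of `ℂ[∂][λ]`. -/
def Pl : Polynomial (Polynomial ℂ) := Polynomial.X
/-- a constant in `ℂ[∂][λ]`. -/
def Pc (a : ℂ) : Polynomial (Polynomial ℂ) := Polynomial.C (Polynomial.C a)

/-- Total degree of a two-variable polynomial in `ℂ[∂][λ]`. -/
def tdeg (p : Polynomial (Polynomial ℂ)) : ℕ :=
  p.support.sup fun n => n + (p.coeff n).natDegree

section ModelPolynomials

/-- structure polynomials of `𝒱(s)` -/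
def pV (s : ℂ) (i j : ℤ) : Polynomial (Polynomial ℂ) :=
  Pd + Pc 2 * Pl + Pc (s * ((i : ℂ) - (j : ℂ)))

/-- structure polynomials of `CL₁(s)` -/
def pCL1 (s : ℂ) (i j : ℤ) : Polynomial (Polynomial ℂ) :=
  Pc ((i : ℂ) + 1) * Pd + Pc ((i : ℂ) + (j : ℂ) + 2) * Pl + Pc (s * ((i : ℂ) - (j : ℂ)))

/-- structure polynomials of `CL₂(b,s)` -/
def pCL2 (b s : ℂ) (i j : ℤ) : Polynomial (Polynomial ℂ) :=
  Pc ((i : ℂ) + b) * Pd + Pc ((i : ℂ) + (j : ℂ) + 2 * b) * Pl + Pc (s * ((i : ℂ) - (j : ℂ)))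

/-- structure polynomials of `SCL₂(b,s)` (for `2b ∈ ℤ`), w.r.t. the basis
`L'ᵢ = Lᵢ (i ≠ -2b)`, `L'_{-2b} = (∂+2s)L_{-2b}` of the corresponding graded
subalgebra of `CL₂(b,s)`. -/
def pSCL2 (b s : ℂ) (i j : ℤ) : Polynomial (Polynomial ℂ) :=
  (if (i : ℂ) = -(2 * b) then Pc (2 * s) - Pl else 1) *
  (if (j : ℂ) = -(2 * b) then Pd + Pl + Pc (2 * s) else 1) *
  (if (i : ℂ) + (j : ℂ) = -(2 * b) then Pc ((i : ℂ) + b) else pCL2 b s i j)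

/-- structure polynomials of `CL₃(s)` -/
def pCL3 (s : ℂ) (i j : ℤ) : Polynomial (Polynomial ℂ) :=
  if i + j = 0 then Pc (i : ℂ) * (Pd + Pc s)
  else if i = 0 then Pc (-(j : ℂ)) * (Pc (2 * s) - Pl)
  else if j = 0 then Pc (i : ℂ) * (Pd + Pl + Pc (2 * s))
  else Pc (i : ℂ) * Pd + Pc ((i : ℂ) + (j : ℂ)) * Pl + Pc (s * ((i : ℂ) - (j : ℂ)))

/-- structure polynomials of `ECL(s)` -/
def pECL (s : ℂ) (i j : ℤ) : Polynomial (Polynomial ℂ) :=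
  if i + j = 0 then Pc (i : ℂ) * (Pd + Pc s) * (Pd + Pc (2 * s))
  else if i = 0 then Pc (-(j : ℂ))
  else if j = 0 then Pc (i : ℂ)
  else Pc (i : ℂ) * Pd + Pc ((i : ℂ) + (j : ℂ)) * Pl + Pc (s * ((i : ℂ) - (j : ℂ)))

/-- structure polynomials of `M(1)` (indices `≥ -1`, completed by skew-symmetry) -/
def pM1 (i j : ℤ) : Polynomial (Polynomial ℂ) :=
  if i = 1 ∧ j = 1 then Pd + Pc 2 * Pl
  else if i = -1 ∧ 1 ≤ j then Pc (((j : ℂ) + 1) * ((j : ℂ) - 2) / 2)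
  else if j = -1 ∧ 1 ≤ i then Pc (-(((i : ℂ) + 1) * ((i : ℂ) - 2) / 2))
  else if i = 0 then Pc (-(j : ℂ))
  else if j = 0 then Pc (i : ℂ)
  else if i = 1 ∧ 2 ≤ j then 1
  else if j = 1 ∧ 2 ≤ i then -1
  else 0

/-- structure polynomials of `M(2)` (completed by skew-symmetry) -/
def pM2 (i j : ℤ) : Polynomial (Polynomial ℂ) :=
  if i = 1 ∧ j = 1 then Pd + Pc 2 * Pl
  else if i = -1 ∧ j = -1 then Pd + Pc 2 * Pl
  else if i = 0 then Pc (-(j : ℂ))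
  else if j = 0 then Pc (i : ℂ)
  else if i = -1 ∧ 1 ≤ j then Pc (((j : ℂ) + 1) * ((j : ℂ) - 2) / 2)
  else if j = -1 ∧ 1 ≤ i then Pc (-(((i : ℂ) + 1) * ((i : ℂ) - 2) / 2))
  else if i = 1 ∧ j ≤ -2 then Pc (((j : ℂ) - 1) * ((j : ℂ) + 2) / 2)
  else if j = 1 ∧ i ≤ -2 then Pc (-(((i : ℂ) - 1) * ((i : ℂ) + 2) / 2))
  else if i = -1 ∧ j ≤ -2 then 1
  else if j = -1 ∧ i ≤ -2 then -1
  else if i = 1 ∧ 2 ≤ j then 1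
  else if j = 1 ∧ 2 ≤ i then -1
  else 0

end ModelPolynomials

namespace LieConformalAlgebra

variable {L : Type} [AddCommGroup L] [Module ℂ L]

/-- `C` is isomorphic to the Virasoro Lie conformal algebra. -/
def IsVir (C : LieConformalAlgebra L) : Prop :=
  ∃ e : L, C.IsFreePolyBasis (fun _ : Unit => e) ∧ C.BracketEq e e e (Pd + Pc 2 * Pl)

/-- `C` is isomorphic to the loop Virasoro Lie conformal algebra `𝒱(s)`. -/
def IsV (C : LieConformalAlgebra L) (s : ℂ) : Prop :=
  ∃ v : ℤ → L, C.IsFreePolyBasis v ∧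
    ∀ i j : ℤ, C.BracketEq (v i) (v j) (v (i + j)) (pV s i j)

/-- `C` is isomorphic to `CL₁(s)`. -/
def IsCL1 (C : LieConformalAlgebra L) (s : ℂ) : Prop :=
  ∃ v : ℤ → L, C.IsFreePolyBasis (fun q : {i : ℤ // -1 ≤ i} => v q.1) ∧
    ∀ i j : ℤ, -1 ≤ i → -1 ≤ j →
      C.BracketEq (v i) (v j) (if -1 ≤ i + j then v (i + j) else 0) (pCL1 s i j)

/-- `C` is isomorphic to `CL₂(b,s)`. -/
def IsCL2 (C : LieConformalAlgebra L) (b s : ℂ) : Prop :=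
  ∃ v : ℤ → L, C.IsFreePolyBasis v ∧
    ∀ i j : ℤ, C.BracketEq (v i) (v j) (v (i + j)) (pCL2 b s i j)

/-- `C` is isomorphic to `SCL₂(b,s)`. -/
def IsSCL2 (C : LieConformalAlgebra L) (b s : ℂ) : Prop :=
  ∃ v : ℤ → L, C.IsFreePolyBasis v ∧
    ∀ i j : ℤ, C.BracketEq (v i) (v j) (v (i + j)) (pSCL2 b s i j)

/-- `C` is isomorphic to `CL₃(s)`. -/
def IsCL3 (C : LieConformalAlgebra L) (s : ℂ) : Prop :=
  ∃ v : ℤ → L, C.IsFreePolyBasis v ∧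
    ∀ i j : ℤ, C.BracketEq (v i) (v j) (v (i + j)) (pCL3 s i j)

/-- `C` is isomorphic to `ECL(s)`. -/
def IsECL (C : LieConformalAlgebra L) (s : ℂ) : Prop :=
  ∃ v : ℤ → L, C.IsFreePolyBasis v ∧
    ∀ i j : ℤ, C.BracketEq (v i) (v j) (v (i + j)) (pECL s i j)

/-- `C` is isomorphic to `M(1)`. -/
def IsM1 (C : LieConformalAlgebra L) : Prop :=
  ∃ v : ℤ → L, C.IsFreePolyBasis (fun q : {i : ℤ // -1 ≤ i} => v q.1) ∧
    ∀ i j : ℤ, -1 ≤ i → -1 ≤ j →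
      C.BracketEq (v i) (v j) (if -1 ≤ i + j then v (i + j) else 0) (pM1 i j)

/-- `C` is isomorphic to `M(2)`. -/
def IsM2 (C : LieConformalAlgebra L) : Prop :=
  ∃ v : ℤ → L, C.IsFreePolyBasis v ∧
    ∀ i j : ℤ, C.BracketEq (v i) (v j) (v (i + j)) (pM2 i j)

/-- `C` is isomorphic to the current Lie conformal algebra `Cur 𝔤`. -/
def IsCur (C : LieConformalAlgebra L) (g : Type) [LieRing g] [LieAlgebra ℂ g] : Prop :=
  ∃ φ : g →ₗ[ℂ] L,
    Function.Bijective (fun f : ℕ →₀ g => f.sum fun k x => (⇑C.D)^[k] (φ x)) ∧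
    (∀ x y : g, C.prd 0 (φ x) (φ y) = φ ⁅x, y⁆) ∧
    ∀ n : ℕ, 1 ≤ n → ∀ x y : g, C.prd n (φ x) (φ y) = 0

/-- `C ≅ Cur sl(2,ℂ)`. -/
def IsCurSl2 (C : LieConformalAlgebra L) : Prop :=
  C.IsCur ↥(LieAlgebra.SpecialLinear.sl (Fin 2) ℂ)

/-- `C ≅ Cur 𝒲`, `𝒲` the Witt algebra (basis `wᵢ`, `[wᵢ,wⱼ] = (j-i)w_{i+j}`). -/
def IsCurWitt (C : LieConformalAlgebra L) : Prop :=
  ∃ v : ℤ → L, C.IsFreePolyBasis v ∧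
    (∀ i j : ℤ, C.prd 0 (v i) (v j) = (((j : ℂ) - (i : ℂ))) • v (i + j)) ∧
    ∀ n : ℕ, 1 ≤ n → ∀ i j : ℤ, C.prd n (v i) (v j) = 0

/-- `C ≅ Cur 𝒲₁`, `𝒲₁` spanned by the `wᵢ`, `i ≥ -1`. -/
def IsCurWitt1 (C : LieConformalAlgebra L) : Prop :=
  ∃ v : ℤ → L, C.IsFreePolyBasis (fun q : {i : ℤ // -1 ≤ i} => v q.1) ∧
    (∀ i j : ℤ, -1 ≤ i → -1 ≤ j →
      C.prd 0 (v i) (v j) = (((j : ℂ) - (i : ℂ))) • (if -1 ≤ i + j then v (i + j) else 0)) ∧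
    ∀ n : ℕ, 1 ≤ n → ∀ i j : ℤ, -1 ≤ i → -1 ≤ j → C.prd n (v i) (v j) = 0

end LieConformalAlgebra

/-- A `ℤ`-graded Lie conformal algebra. -/
structure GradedLCA (L : Type) [AddCommGroup L] [Module ℂ L]
    extends LieConformalAlgebra L where
  G : ℤ → Submodule ℂ L
  internal : DirectSum.IsInternal G
  dGrade : ∀ i : ℤ, ∀ x ∈ G i, D x ∈ G i
  prdGrade : ∀ (i j : ℤ) (n : ℕ), ∀ a ∈ G i, ∀ b ∈ G j, prd n a b ∈ G (i + j)

namespace GradedLCA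

variable {L : Type} [AddCommGroup L] [Module ℂ L]

/-- A graded ideal: an ideal generated by homogeneous elements. -/
def IsGradedIdeal (C : GradedLCA L) (N : Submodule ℂ L) : Prop :=
  C.toLieConformalAlgebra.IsIdeal N ∧ (⨆ i : ℤ, N ⊓ C.G i) = N

/-- `L` is simple graded: nonzero bracket, and the only graded ideals are `⊥` and `⊤`. -/
def IsSimpleGraded (C : GradedLCA L) : Prop :=
  (∃ (n : ℕ) (a b : L), C.prd n a b ≠ 0) ∧
  ∀ N : Submodule ℂ L, C.IsGradedIdeal N → N = ⊥ ∨ N = ⊤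

/-- `[L_λ L] = L`. -/
def Perfect (C : GradedLCA L) : Prop :=
  Submodule.span ℂ {x : L | ∃ (n : ℕ) (a b : L), x = C.prd n a b} = ⊤

/-- Each component `L_i` is a nilpotent `L₀`-module under the adjoint action. -/
def Rootless (C : GradedLCA L) : Prop :=
  ∀ i : ℤ, ∃ n : ℕ, 1 ≤ n ∧ ∀ l : List (L × ℕ), l.length = n →
    (∀ q ∈ l, q.1 ∈ C.G 0) → ∀ x ∈ C.G i, C.toLieConformalAlgebra.iterPrd l x = 0

/-- The ranks of the components are uniformly bounded. -/
def UniformlyBounded (C : GradedLCA L) : Prop :=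
  ∃ N : ℕ, 1 ≤ N ∧ ∀ i : ℤ, C.toLieConformalAlgebra.polyRankLE (C.G i) N

end GradedLCA

/-- A module over a Lie conformal algebra, encoded via the `n`-th actions. -/
structure LCAModule {L : Type} [AddCommGroup L] [Module ℂ L] (C : LieConformalAlgebra L)
    (M : Type) [AddCommGroup M] [Module ℂ M] : Type where
  DM : M →ₗ[ℂ] M
  act : ℕ → L →ₗ[ℂ] M →ₗ[ℂ] M
  bound : ∀ (a : L) (m : M), ∃ N : ℕ, ∀ n : ℕ, N ≤ n → act n a m = 0
  sesq : ∀ (n : ℕ) (a : L) (m : M), act n (C.D a) m = (-(n : ℂ)) • act (n - 1) a m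
  sesq' : ∀ (n : ℕ) (a : L) (m : M),
    act n a (DM m) = DM (act n a m) + (n : ℂ) • act (n - 1) a m
  comm : ∀ (p q : ℕ) (a b : L) (m : M),
    act p a (act q b m) - act q b (act p a m)
      = ∑ j ∈ Finset.range (p + 1), (Nat.choose p j : ℂ) • act (p + q - j) (C.prd j a b) m

namespace LCAModule

variable {L : Type} [AddCommGroup L] [Module ℂ L] {C : LieConformalAlgebra L}
variable {M : Type} [AddCommGroup M] [Module ℂ M]

/-- Iterated action `a₁_(k₁)(a₂_(k₂)(⋯ m))`. -/
def iterAct (ρ : LCAModule C M) : List (L × ℕ) → M → M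
  | [], m => m
  | (a, k) :: t, m => ρ.act k a (iterAct ρ t m)

/-- `N` is an `L`-submodule of `M`. -/
def IsSub (ρ : LCAModule C M) (N : Submodule ℂ M) : Prop :=
  (∀ m ∈ N, ρ.DM m ∈ N) ∧ ∀ (n : ℕ) (a : L), ∀ m ∈ N, ρ.act n a m ∈ N

/-- `M` is a nilpotent module. -/
def Nilpotent (ρ : LCAModule C M) : Prop :=
  ∃ n : ℕ, 1 ≤ n ∧ ∀ l : List (L × ℕ), l.length = n → ∀ m : M, ρ.iterAct l m = 0

/-- `M` is finitely generated as an `L`-module. -/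
def FG (ρ : LCAModule C M) : Prop :=
  ∃ s : Finset M, ∀ N : Submodule ℂ M, ρ.IsSub N → (s : Set M) ⊆ (N : Set M) → N = ⊤

/-- The `L`-submodule `N` is finitely generated as an `L`-module. -/
def FGIn (ρ : LCAModule C M) (N : Submodule ℂ M) : Prop :=
  ∃ s : Finset M, (s : Set M) ⊆ (N : Set M) ∧
    ∀ P : Submodule ℂ M, ρ.IsSub P → (s : Set M) ⊆ (P : Set M) → N ≤ P

/-- `M` is finitely generated as a `ℂ[∂]`-module. -/
def FGPoly (ρ : LCAModule C M) : Prop :=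
  ∃ s : Finset M, ∀ N : Submodule ℂ M, (∀ m ∈ N, ρ.DM m ∈ N) → (s : Set M) ⊆ (N : Set M) → N = ⊤

end LCAModule

/-- A family is `ℂ[∂]`-linearly independent. -/
def polyIndep {M : Type} [AddCommGroup M] [Module ℂ M] (DM : M →ₗ[ℂ] M)
    {r : ℕ} (v : Fin r → M) : Prop :=
  ∀ q : Fin r → Polynomial ℂ,
    (∑ k, (q k).sum fun t c => c • (⇑DM)^[t] (v k)) = 0 → ∀ k, q k = 0

/-- The `ℂ[∂]`-rank of a submodule, in `ℕ∞`. -/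
def polyRank {M : Type} [AddCommGroup M] [Module ℂ M] (DM : M →ₗ[ℂ] M)
    (N : Submodule ℂ M) : ℕ∞ :=
  ⨆ r ∈ {r : ℕ | ∃ v : Fin r → M, (∀ k, v k ∈ N) ∧ polyIndep DM v}, (r : ℕ∞)

/-- A graded module over a `ℤ`-graded Lie conformal algebra. -/
structure GradedLCAModule {L : Type} [AddCommGroup L] [Module ℂ L] (C : GradedLCA L)
    (M : Type) [AddCommGroup M] [Module ℂ M]
    extends LCAModule C.toLieConformalAlgebra M where
  GM : ℤ → Submodule ℂ M
  internal : DirectSum.IsInternal GM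
  dGrade : ∀ i : ℤ, ∀ m ∈ GM i, DM m ∈ GM i
  actGrade : ∀ (i j : ℤ) (n : ℕ), ∀ a ∈ C.G i, ∀ m ∈ GM j, act n a m ∈ GM (i + j)

namespace GradedLCAModule

variable {L : Type} [AddCommGroup L] [Module ℂ L] {C : GradedLCA L}
variable {M : Type} [AddCommGroup M] [Module ℂ M]

/-- `Mⁿ = ⊕_{|i| ≤ n} M_i`. -/
def seg (ρ : GradedLCAModule C M) (n : ℕ) : Submodule ℂ M :=
  ⨆ i : ℤ, ⨆ _ : |i| ≤ (n : ℤ), ρ.GM i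

/-- `e(M) = liminf (1/n) rank_{ℂ[∂]} Mⁿ`. -/
def eM (ρ : GradedLCAModule C M) : ℝ≥0∞ :=
  Filter.atTop.liminf fun n : ℕ => (polyRank ρ.DM (ρ.seg n) : ℝ≥0∞) / (n : ℝ≥0∞)

/-- Each `M_i` is a nilpotent `L₀`-module. -/
def Weightless (ρ : GradedLCAModule C M) : Prop :=
  ∀ i : ℤ, ∃ n : ℕ, 1 ≤ n ∧ ∀ l : List (L × ℕ), l.length = n →
    (∀ q ∈ l, q.1 ∈ C.G 0) → ∀ m ∈ ρ.GM i, ρ.toLCAModule.iterAct l m = 0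

/-- The submodule `I(M)` generated by all homogeneous `v` lying in the span of
the iterated actions of `L` on `v`. -/
def IM (ρ : GradedLCAModule C M) : Submodule ℂ M :=
  sInf {N : Submodule ℂ M | ρ.toLCAModule.IsSub N ∧
    {v : M | (∃ i : ℤ, v ∈ ρ.GM i) ∧
      v ∈ Submodule.span ℂ
        {w : M | ∃ l : List (L × ℕ), 1 ≤ l.length ∧ w = ρ.toLCAModule.iterAct l v}} ⊆ N}

end GradedLCAModule

/-- The structure context for graded Lie conformal algebras all of whose
nonzero components are free of rank one over `ℂ[∂]`: fixed homogeneous bases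
`bas i` and structure polynomials `sp i j ∈ ℂ[∂][λ]`, with `0 ∈ Supp(L)` and
`L₀` abelian. -/
structure RankOneContext (L : Type) [AddCommGroup L] [Module ℂ L]
    extends GradedLCA L where
  bas : ℤ → L
  sp : ℤ → ℤ → Polynomial (Polynomial ℂ)
  bas_mem : ∀ i : ℤ, bas i ∈ G i
  bas_zero : ∀ i : ℤ, G i = ⊥ → bas i = 0
  bas_indep : ∀ i : ℤ, G i ≠ ⊥ → LinearIndependent ℂ fun k : ℕ => (⇑D)^[k] (bas i)
  bas_span : ∀ i : ℤ, G i ≠ ⊥ →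
    G i = Submodule.span ℂ (Set.range fun k : ℕ => (⇑D)^[k] (bas i))
  sp_brkt : ∀ (i j : ℤ) (n : ℕ),
    prd n (bas i) (bas j)
      = (Nat.factorial n : ℂ) • (((sp i j).coeff n).sum fun k c => c • (⇑D)^[k] (bas (i + j)))
  sp_zero : ∀ i j : ℤ, (G i = ⊥ ∨ G j = ⊥ ∨ G (i + j) = ⊥) → sp i j = 0
  supp_zero : G 0 ≠ ⊥
  abelian0 : ∀ n : ℕ, ∀ x ∈ G 0, ∀ y ∈ G 0, prd n x y = 0

/-- A Lie conformal algebra of class `𝒱`. -/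
structure ClassV (L : Type) [AddCommGroup L] [Module ℂ L]
    extends RankOneContext L where
  supp_one : G 1 ≠ ⊥
  supp_negone : G (-1) ≠ ⊥
  genV : ∀ N : Submodule ℂ L, (∀ x ∈ N, D x ∈ N) →
    (∀ n : ℕ, ∀ a ∈ N, ∀ b ∈ N, prd n a b ∈ N) →
    G 1 ≤ N → G 0 ≤ N → G (-1) ≤ N → N = ⊤
  ne_m11 : sp (-1) 1 ≠ 0
  ne_01 : sp 0 1 ≠ 0

namespace GradedLCA

variable {L : Type} [AddCommGroup L] [Module ℂ L]

/-- opposite grading -/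
def opp (C : GradedLCA L) : GradedLCA L where
  toLieConformalAlgebra := C.toLieConformalAlgebra
  G := fun i => C.G (-i)
  internal := by
    rw [DirectSum.isInternal_submodule_iff_iSupIndep_and_iSup_eq_top]
    refine ⟨C.internal.submodule_iSupIndep.comp neg_injective, ?_⟩
    have h := C.internal.submodule_iSup_eq_top
    rw [← h]
    exact (Equiv.neg ℤ).iSup_comp (g := C.G)
  dGrade := fun i x hx => C.dGrade (-i) x hx
  prdGrade := fun i j n a ha b hb => by
    rw [neg_add]; exact C.prdGrade _ _ n a ha b hb

lemma eq_of_le_of_iSup (C : GradedLCA L) (Q : ℤ → Submodule ℂ L) (hQ : ∀ k, Q k ≤ C.G k)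
    (htop : ∀ N : Submodule ℂ L, (∀ k, Q k ≤ N) → N = ⊤) (k : ℤ) : C.G k ≤ Q k := by
  have hi := C.internal.submodule_iSupIndep k
  intro x hx
  have h1 : Q k ⊔ (⨆ (j : ℤ) (_ : j ≠ k), C.G j) = ⊤ := by
    apply htop
    intro j
    by_cases h : j = k
    · subst h; exact le_sup_left
    · exact le_trans (le_trans (hQ j) (le_iSup₂_of_le j h le_rfl)) le_sup_right
  have h2 : x ∈ Q k ⊔ (⨆ (j : ℤ) (_ : j ≠ k), C.G j) := by rw [h1]; trivial
  obtain ⟨y, hy, z, hz, hyz⟩ := Submodule.mem_sup.1 h2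
  have h3 : z ∈ C.G k := by
    have : z = x - y := by rw [← hyz]; abel
    rw [this]; exact Submodule.sub_mem _ hx (hQ k hy)
  have h4 : z = 0 := (Submodule.disjoint_def.1 hi) z h3 hz
  rw [← hyz, h4, add_zero]; exact hy

lemma hom_induction (C : GradedLCA L) {p : L → Prop} (x : L)
    (hm : ∀ i, ∀ x ∈ C.G i, p x) (h0 : p 0) (ha : ∀ x y, p x → p y → p (x + y)) : p x := by
  have hx : x ∈ ⨆ i, C.G i := by rw [C.internal.submodule_iSup_eq_top]; trivial
  exact Submodule.iSup_induction C.G (motive := p) hx hm h0 ha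

/-- components of the derived algebra -/
def Bk (C : GradedLCA L) (k : ℤ) : Submodule ℂ L :=
  Submodule.span ℂ {x : L | ∃ (i j : ℤ) (n : ℕ) (a b : L),
    i + j = k ∧ a ∈ C.G i ∧ b ∈ C.G j ∧ x = C.prd n a b}

lemma le_Bk (C : GradedLCA L) (hp : C.Perfect) (k : ℤ) : C.G k ≤ C.Bk k := by
  refine C.eq_of_le_of_iSup C.Bk ?_ ?_ k
  · intro k
    refine Submodule.span_le.2 ?_
    rintro x ⟨i, j, n, a, b, rfl, ha, hb, rfl⟩
    exact C.prdGrade i j n a ha b hb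
  · intro N hN
    rw [eq_top_iff, ← hp]
    refine Submodule.span_le.2 ?_
    rintro x ⟨n, a, b, rfl⟩
    refine C.hom_induction (p := fun a => C.prd n a b ∈ N) a ?_ (by simp) ?_
    · intro i a ha
      refine C.hom_induction (p := fun b => C.prd n a b ∈ N) b ?_ (by simp) ?_
      · intro j b hb
        exact hN (i + j) (Submodule.subset_span ⟨i, j, n, a, b, rfl, ha, hb, rfl⟩)
      · intro x y hx hy
        rw [map_add]; exact N.add_mem hx hy
    · intro x y hx hy
      rw [map_add, LinearMap.add_apply]; exact N.add_mem hx hy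

/-- generated by components of degree at most `d` -/
def Gen (C : GradedLCA L) (d : ℤ) : Prop :=
  ∀ N : Submodule ℂ L, C.toLieConformalAlgebra.IsSubalgebra N →
    (∀ i : ℤ, |i| ≤ d → C.G i ≤ N) → N = ⊤

inductive Pm (C : GradedLCA L) (d : ℤ) : ℤ → L → Prop
  | base (k : ℤ) (x : L) : |k| ≤ d → x ∈ C.G k → Pm C d k x
  | zero (k : ℤ) : Pm C d k 0
  | add (k : ℤ) (x y : L) : Pm C d k x → Pm C d k y → Pm C d k (x + y)
  | smul (k : ℤ) (c : ℂ) (x : L) : Pm C d k x → Pm C d k (c • x)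
  | pos (k a : ℤ) (n : ℕ) (x y : L) : d < k → 1 ≤ a → a ≤ d → x ∈ C.G a →
      Pm C d (k - a) y → Pm C d k (C.prd n x y)
  | neg (k a : ℤ) (n : ℕ) (x y : L) : k < -d → a ≤ -1 → -d ≤ a → x ∈ C.G a →
      Pm C d (k - a) y → Pm C d k (C.prd n x y)

def Qk (C : GradedLCA L) (d k : ℤ) : Submodule ℂ L where
  carrier := {x | Pm C d k x}
  zero_mem' := Pm.zero k
  add_mem' := fun {x y} hx hy => Pm.add k x y hx hy
  smul_mem' := fun c x hx => Pm.smul k c x hx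

lemma Pm_mem (C : GradedLCA L) (d : ℤ) {k : ℤ} {x : L} (h : Pm C d k x) : x ∈ C.G k := by
  induction h with
  | base k x _ h => exact h
  | zero k => exact Submodule.zero_mem _
  | add k x y _ _ h1 h2 => exact Submodule.add_mem _ h1 h2
  | smul k c x _ h => exact Submodule.smul_mem _ _ h
  | pos k a n x y _ _ _ hx _ h =>
    have := C.prdGrade _ _ n x hx y h
    rwa [add_sub_cancel] at this
  | neg k a n x y _ _ _ hx _ h =>
    have := C.prdGrade _ _ n x hx y h
    rwa [add_sub_cancel] at this

lemma jac' (C : GradedLCA L) (m n : ℕ) (a b c : L) :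
    C.prd m a (C.prd n b c) = C.prd n b (C.prd m a c) +
      ∑ j ∈ Finset.range (m + 1), (Nat.choose m j : ℂ) • C.prd (m + n - j) (C.prd j a b) c := by
  rw [← C.jacobi m n a b c]; abel

/-- if all double products lie in `N` then so do products with a product on the left -/
lemma left_prd (C : GradedLCA L) (N : Submodule ℂ L) (a b c : L)
    (h1 : ∀ m n, C.prd m a (C.prd n b c) ∈ N) (h2 : ∀ m n, C.prd n b (C.prd m a c) ∈ N) :
    ∀ m n, C.prd n (C.prd m a b) c ∈ N := by
  intro m
  induction m using Nat.strong_induction_on with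
  | _ m ih =>
    intro n
    have h := C.jacobi m n a b c
    rw [Finset.sum_range_succ] at h
    simp only [Nat.choose_self, Nat.cast_one, one_smul, Nat.add_sub_cancel_left] at h
    have h' : C.prd n (C.prd m a b) c = (C.prd m a (C.prd n b c) - C.prd n b (C.prd m a c)) -
        ∑ j ∈ Finset.range m, (Nat.choose m j : ℂ) • C.prd (m + n - j) (C.prd j a b) c := by
      rw [h]; abel
    rw [h']
    refine N.sub_mem (N.sub_mem (h1 _ _) (h2 _ _)) (N.sum_mem ?_)
    intro j hj
    exact N.smul_mem _ (ih j (Finset.mem_range.1 hj) _)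

lemma Pm_act (C : GradedLCA L) (d : ℤ) {k : ℤ} {x : L} (h : Pm C d k x) :
    ∀ (i : ℤ) (v : L) (n : ℕ), |i| ≤ d → v ∈ C.G i → Pm C d (i + k) (C.prd n v x) := by
  induction h with
  | base k x hk h =>
    intro i v n hi hv
    by_cases h1 : |i + k| ≤ d
    · exact Pm.base _ _ h1 (C.prdGrade _ _ n v hv x h)
    · rw [abs_le] at hi hk h1
      by_cases h2 : d < i + k
      · refine Pm.pos _ i n v x h2 (by omega) (by omega) hv ?_
        rw [add_sub_cancel_left]
        exact Pm.base _ _ (abs_le.2 hk) h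
      · refine Pm.neg _ i n v x (by omega) (by omega) (by omega) hv ?_
        rw [add_sub_cancel_left]
        exact Pm.base _ _ (abs_le.2 hk) h
  | zero k => intro i v n _ _; rw [map_zero]; exact Pm.zero _
  | add k x y _ _ h1 h2 =>
    intro i v n hi hv; rw [map_add]; exact Pm.add _ _ _ (h1 i v n hi hv) (h2 i v n hi hv)
  | smul k c x _ h =>
    intro i v n hi hv; rw [map_smul]; exact Pm.smul _ _ _ (h i v n hi hv)
  | pos k a m z y hk ha1 ha2 hz hy ih =>
    intro i v n hi hv
    have hi' := abs_le.1 hi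
    have hmem := C.prdGrade _ _ n v hv _ (Pm_mem C d (Pm.pos k a m z y hk ha1 ha2 hz hy))
    by_cases h1 : i + k ≤ d
    · exact Pm.base _ _ (abs_le.2 (by omega)) hmem
    by_cases h2 : 1 ≤ i
    · refine Pm.pos _ i n v _ (by omega) h2 (by omega) hv ?_
      rw [add_sub_cancel_left]
      exact Pm.pos k a m z y hk ha1 ha2 hz hy
    · rw [jac']
      refine Pm.add _ _ _ ?_ ?_
      · refine Pm.pos _ a m z _ (by omega) ha1 ha2 hz ?_
        rw [add_sub_assoc]; exact ih i v n hi hv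
      · refine (Qk C d (i + k)).sum_mem fun j _ => (Qk C d (i + k)).smul_mem _ ?_
        have := ih (i + a) (C.prd j v z) (n + m - j) (abs_le.2 (by omega))
          (C.prdGrade _ _ j v hv z hz)
        rwa [show i + a + (k - a) = i + k by ring] at this
  | neg k a m z y hk ha1 ha2 hz hy ih =>
    intro i v n hi hv
    have hi' := abs_le.1 hi
    have hmem := C.prdGrade _ _ n v hv _ (Pm_mem C d (Pm.neg k a m z y hk ha1 ha2 hz hy))
    by_cases h1 : -d ≤ i + k
    · exact Pm.base _ _ (abs_le.2 (by omega)) hmem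
    by_cases h2 : i ≤ -1
    · refine Pm.neg _ i n v _ (by omega) h2 (by omega) hv ?_
      rw [add_sub_cancel_left]
      exact Pm.neg k a m z y hk ha1 ha2 hz hy
    · rw [jac']
      refine Pm.add _ _ _ ?_ ?_
      · refine Pm.neg _ a m z _ (by omega) ha1 ha2 hz ?_
        rw [add_sub_assoc]; exact ih i v n hi hv
      · refine (Qk C d (i + k)).sum_mem fun j _ => (Qk C d (i + k)).smul_mem _ ?_
        have := ih (i + a) (C.prd j v z) (n + m - j) (abs_le.2 (by omega))
          (C.prdGrade _ _ j v hv z hz)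
        rwa [show i + a + (k - a) = i + k by ring] at this

lemma D_prd (C : GradedLCA L) (n : ℕ) (a b : L) :
    C.D (C.prd n a b) = C.prd n a (C.D b) - (n : ℂ) • C.prd (n - 1) a b := by
  rw [C.sesq']; abel

lemma Pm_D (C : GradedLCA L) (d : ℤ) {k : ℤ} {x : L} (h : Pm C d k x) : Pm C d k (C.D x) := by
  induction h with
  | base k x hk h => exact Pm.base _ _ hk (C.dGrade _ _ h)
  | zero k => rw [map_zero]; exact Pm.zero _
  | add k x y _ _ h1 h2 => rw [map_add]; exact Pm.add _ _ _ h1 h2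
  | smul k c x _ h => rw [map_smul]; exact Pm.smul _ _ _ h
  | pos k a m z y hk ha1 ha2 hz hy ih =>
    rw [D_prd]
    exact (Qk C d k).sub_mem (Pm.pos k a m z _ hk ha1 ha2 hz ih)
      ((Qk C d k).smul_mem _ (Pm.pos k a _ z _ hk ha1 ha2 hz hy))
  | neg k a m z y hk ha1 ha2 hz hy ih =>
    rw [D_prd]
    exact (Qk C d k).sub_mem (Pm.neg k a m z _ hk ha1 ha2 hz ih)
      ((Qk C d k).smul_mem _ (Pm.neg k a _ z _ hk ha1 ha2 hz hy))

lemma Qk_sup_act (C : GradedLCA L) (d : ℤ) (i : ℤ) (v : L) (n : ℕ) (hi : |i| ≤ d)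
    (hv : v ∈ C.G i) (w : L) (hw : w ∈ ⨆ k, Qk C d k) : C.prd n v w ∈ ⨆ k, Qk C d k := by
  refine Submodule.iSup_induction (Qk C d) (motive := fun w => C.prd n v w ∈ ⨆ k, Qk C d k)
    hw ?_ ?_ ?_
  · intro k x hx
    exact Submodule.mem_iSup_of_mem (i + k) (Pm_act C d hx i v n hi hv)
  · rw [map_zero]; exact Submodule.zero_mem _
  · intro x y hx hy; rw [map_add]; exact Submodule.add_mem _ hx hy

lemma Pm_prd (C : GradedLCA L) (d : ℤ) {k : ℤ} {x : L} (h : Pm C d k x) :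
    ∀ (n : ℕ) (w : L), w ∈ ⨆ k, Qk C d k → C.prd n x w ∈ ⨆ k, Qk C d k := by
  induction h with
  | base k x hk h => intro n w hw; exact Qk_sup_act C d k x n hk h w hw
  | zero k => intro n w _; simp
  | add k x y _ _ h1 h2 =>
    intro n w hw; rw [map_add, LinearMap.add_apply]
    exact Submodule.add_mem _ (h1 n w hw) (h2 n w hw)
  | smul k c x _ h =>
    intro n w hw; rw [map_smul, LinearMap.smul_apply]
    exact Submodule.smul_mem _ _ (h n w hw)
  | pos k a m z y hk ha1 ha2 hz hy ih =>
    intro n w hw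
    have hz' := fun m => Qk_sup_act C d a z m (abs_le.2 (by omega)) hz
    exact left_prd C _ z y w (fun m n => hz' m _ (ih n w hw)) (fun m n => ih n _ (hz' m w hw)) m n
  | neg k a m z y hk ha1 ha2 hz hy ih =>
    intro n w hw
    have hz' := fun m => Qk_sup_act C d a z m (abs_le.2 (by omega)) hz
    exact left_prd C _ z y w (fun m n => hz' m _ (ih n w hw)) (fun m n => ih n _ (hz' m w hw)) m n

lemma Pm_of_mem (C : GradedLCA L) (d : ℤ) (hg : C.Gen d) {k : ℤ} {x : L} (hx : x ∈ C.G k) :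
    Pm C d k x := by
  have htop : (⨆ k, Qk C d k) = ⊤ := by
    refine hg _ ⟨?_, ?_⟩ ?_
    · intro x hx
      refine Submodule.iSup_induction (Qk C d) (motive := fun w => C.D w ∈ ⨆ k, Qk C d k)
        hx ?_ ?_ ?_
      · intro k x hx
        exact Submodule.mem_iSup_of_mem k (Pm_D C d hx)
      · rw [map_zero]; exact Submodule.zero_mem _
      · intro x y hx hy; rw [map_add]; exact Submodule.add_mem _ hx hy
    · intro n a ha b hb
      refine Submodule.iSup_induction (Qk C d) (motive := fun a => C.prd n a b ∈ ⨆ k, Qk C d k)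
        ha ?_ ?_ ?_
      · intro k x hx
        exact Pm_prd C d hx n b hb
      · simp
      · intro x y hx hy; rw [map_add, LinearMap.add_apply]; exact Submodule.add_mem _ hx hy
    · intro i hi x hx
      exact Submodule.mem_iSup_of_mem i (Pm.base i x hi hx)
  refine C.eq_of_le_of_iSup (Qk C d) (fun k x hx => Pm_mem C d hx) ?_ k hx
  intro N hN
  rw [eq_top_iff, ← htop]
  exact iSup_le hN

lemma iter_add (C : LieConformalAlgebra L) (l : List (L × ℕ)) (x y : L) :
    C.iterPrd l (x + y) = C.iterPrd l x + C.iterPrd l y := by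
  induction l with
  | nil => rfl
  | cons q l ih =>
    obtain ⟨a, k⟩ := q
    simp only [LieConformalAlgebra.iterPrd, ih, map_add]

lemma iter_smul (C : LieConformalAlgebra L) (l : List (L × ℕ)) (c : ℂ) (x : L) :
    C.iterPrd l (c • x) = c • C.iterPrd l x := by
  induction l with
  | nil => rfl
  | cons q l ih =>
    obtain ⟨a, k⟩ := q
    simp only [LieConformalAlgebra.iterPrd, ih, map_smul]

lemma iter_append (C : LieConformalAlgebra L) (l : List (L × ℕ)) (a : L) (k : ℕ) (x : L) :
    C.iterPrd (l ++ [(a, k)]) x = C.iterPrd l (C.prd k a x) := by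
  induction l with
  | nil => rfl
  | cons q l ih =>
    obtain ⟨a, k⟩ := q
    simp only [List.cons_append, LieConformalAlgebra.iterPrd, ih]

lemma iter_mem (C : GradedLCA L) (N : Submodule ℂ L)
    (hN : ∀ (n : ℕ), ∀ a ∈ C.G 0, ∀ b ∈ N, C.prd n a b ∈ N) (l : List (L × ℕ))
    (hl : ∀ q ∈ l, q.1 ∈ C.G 0) (x : L) (hx : x ∈ N) :
    C.toLieConformalAlgebra.iterPrd l x ∈ N := by
  induction l with
  | nil => exact hx
  | cons q l ih =>
    obtain ⟨a, k⟩ := q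
    exact hN k a (hl (a, k) (by simp)) _ (ih fun q hq => hl q (by simp [hq]))

lemma nak (C : GradedLCA L) (hr : C.Rootless) (i : ℤ) (N : Submodule ℂ L)
    (hN : ∀ (n : ℕ), ∀ a ∈ C.G 0, ∀ b ∈ N, C.prd n a b ∈ N)
    (h : C.G i ≤ N ⊔ C.toLieConformalAlgebra.bspan (C.G 0) (C.G i)) : C.G i ≤ N := by
  obtain ⟨n, _, hn⟩ := hr i
  have key : ∀ s t : ℕ, s + t = n → ∀ l : List (L × ℕ), l.length = t →
      (∀ q ∈ l, q.1 ∈ C.G 0) → ∀ x ∈ C.G i, C.toLieConformalAlgebra.iterPrd l x ∈ N := by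
    intro s
    induction s with
    | zero =>
      intro t ht l hl hl0 x hx
      rw [hn l (by omega) hl0 x hx]; exact N.zero_mem
    | succ s ih =>
      intro t ht l hl hl0 x hx
      obtain ⟨y, hy, z, hz, rfl⟩ := Submodule.mem_sup.1 (h hx)
      rw [iter_add]
      refine N.add_mem (iter_mem C N hN l hl0 y hy) ?_
      clear hx
      unfold LieConformalAlgebra.bspan at hz
      induction hz using Submodule.span_induction with
      | mem z hz =>
        obtain ⟨k, u, w, hu, hw, rfl⟩ := hz
        rw [← iter_append]
        refine ih (t + 1) (by omega) _ (by simp [hl]) ?_ w hw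
        intro q hq
        rcases List.mem_append.1 hq with hq | hq
        · exact hl0 q hq
        · simp only [List.mem_singleton] at hq
          subst hq; exact hu
      | zero =>
        have := iter_smul C.toLieConformalAlgebra l 0 0
        rw [zero_smul, zero_smul] at this
        rw [this]; exact N.zero_mem
      | add x y _ _ h1 h2 => rw [iter_add]; exact N.add_mem h1 h2
      | smul c x _ h1 => rw [iter_smul]; exact N.smul_mem _ h1
  intro x hx
  exact key n 0 (by omega) [] rfl (by simp) x hx

lemma skew_mem (C : GradedLCA L) (R : Submodule ℂ L) (hD : ∀ x ∈ R, C.D x ∈ R) (a b : L)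
    (h : ∀ n, C.prd n b a ∈ R) (n : ℕ) : C.prd n a b ∈ R := by
  rw [C.skew]
  refine R.neg_mem ?_
  refine finsum_induction (fun x => x ∈ R) R.zero_mem (fun x y hx hy => R.add_mem hx hy) ?_
  intro j
  refine R.smul_mem _ ?_
  have : ∀ (j : ℕ) (x : L), x ∈ R → (⇑C.D)^[j] x ∈ R := by
    intro j
    induction j with
    | zero => intro x hx; exact hx
    | succ j ih => intro x hx; rw [Function.iterate_succ_apply]; exact ih _ (hD x hx)
  exact this j _ (h _)

lemma step_top (C : GradedLCA L) (hp : C.Perfect) (hr : C.Rootless) (d : ℤ) (hd : 1 ≤ d)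
    (hg : C.Gen d) (N : Submodule ℂ L) (hN : C.toLieConformalAlgebra.IsSubalgebra N)
    (hGN : ∀ i : ℤ, |i| ≤ d - 1 → C.G i ≤ N) : C.G d ≤ N := by
  have h0 : C.G 0 ≤ N := hGN 0 (by simpa using hd)
  refine C.nak hr d N (fun n a ha b hb => hN.2 n a (h0 ha) b hb) ?_
  set R := N ⊔ C.toLieConformalAlgebra.bspan (C.G 0) (C.G d) with hR
  have hb : ∀ n, ∀ a ∈ C.G 0, ∀ b ∈ C.G d, C.prd n a b ∈ R := fun n a ha b hb =>
    le_sup_right (a := N) (Submodule.subset_span ⟨n, a, b, ha, hb, rfl⟩)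
  have hRD : ∀ x ∈ R, C.D x ∈ R := by
    intro x hx
    obtain ⟨y, hy, z, hz, rfl⟩ := Submodule.mem_sup.1 hx
    rw [map_add]
    refine R.add_mem (le_sup_left (a := N) (hN.1 y hy)) ?_
    clear hx
    unfold LieConformalAlgebra.bspan at hz
    induction hz using Submodule.span_induction with
    | mem z hz =>
      obtain ⟨k, u, w, hu, hw, rfl⟩ := hz
      rw [D_prd]
      exact R.sub_mem (hb _ _ hu _ (C.dGrade _ _ hw)) (R.smul_mem _ (hb _ _ hu _ hw))
    | zero => rw [map_zero]; exact R.zero_mem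
    | add x y _ _ h1 h2 => rw [map_add]; exact R.add_mem h1 h2
    | smul c x _ h1 => rw [map_smul]; exact R.smul_mem _ h1
  have hbase : ∀ k : ℤ, 0 ≤ k → k ≤ d → ∀ a ∈ C.G k, ∀ b ∈ C.G (d - k), ∀ n,
      C.prd n a b ∈ R := by
    intro k hk0 hkd a ha b hb' n
    rcases eq_or_lt_of_le hk0 with rfl | hk0
    · rw [sub_zero] at hb'; exact hb n a ha b hb'
    rcases eq_or_lt_of_le hkd with rfl | hkd
    · rw [sub_self] at hb'
      exact C.skew_mem R hRD a b (fun n => hb n b hb' a ha) n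
    · exact le_sup_left (a := N) (hN.2 n a (hGN k (abs_le.2 (by omega)) ha) b
        (hGN _ (abs_le.2 (by omega)) hb'))
  have hpos : ∀ (k : ℤ) (a : L), Pm C d k a → 0 ≤ k → ∀ b ∈ C.G (d - k), ∀ n,
      C.prd n a b ∈ R := by
    intro k a h
    induction h with
    | base k x hk h => intro hk0 b hb' n; exact hbase k hk0 (abs_le.1 hk).2 x h b hb' n
    | zero k => intro _ b _ n; simp
    | add k x y _ _ h1 h2 =>
      intro hk b hb' n; rw [map_add, LinearMap.add_apply]
      exact R.add_mem (h1 hk b hb' n) (h2 hk b hb' n)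
    | smul k c x _ h =>
      intro hk b hb' n; rw [map_smul, LinearMap.smul_apply]
      exact R.smul_mem _ (h hk b hb' n)
    | pos k c m z y hk hc1 hc2 hz hy ih =>
      intro _ b hb' n
      refine left_prd C R z y b ?_ ?_ m n
      · intro m n
        refine hbase c (by omega) hc2 z hz _ ?_ m
        have := C.prdGrade _ _ n y (Pm_mem C d hy) b hb'
        rwa [show k - c + (d - k) = d - c by ring] at this
      · intro m n
        refine ih (by omega) _ ?_ n
        have := C.prdGrade _ _ m z hz b hb'
        rwa [show c + (d - k) = d - (k - c) by ring] at this
    | neg k c m z y hk hc1 hc2 hz hy ih => intro h; omega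
  refine (C.le_Bk hp d).trans (Submodule.span_le.2 ?_)
  rintro x ⟨i, j, n, a, b, hij, ha, hb', rfl⟩
  obtain rfl : j = d - i := by omega
  by_cases hi : 0 ≤ i
  · exact hpos i a (Pm_of_mem C d hg ha) hi b hb' n
  · refine C.skew_mem R hRD a b (fun n => ?_) n
    refine hpos (d - i) b (Pm_of_mem C d hg hb') (by omega) a ?_ n
    rwa [show d - (d - i) = i by ring]

lemma Gen_opp (C : GradedLCA L) (d : ℤ) (hg : C.Gen d) : C.opp.Gen d := by
  intro N hN h
  refine hg N hN fun i hi => ?_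
  have := h (-i) (by rwa [abs_neg])
  simpa [opp] using this

lemma rootless_opp (C : GradedLCA L) (hr : C.Rootless) : C.opp.Rootless := by
  intro i
  have := hr (-i)
  simpa [opp] using this

lemma Gen_step (C : GradedLCA L) (hp : C.Perfect) (hr : C.Rootless) (d : ℤ) (hd : 1 ≤ d)
    (hg : C.Gen d) : C.Gen (d - 1) := by
  intro N hN h
  have h1 := C.step_top hp hr d hd hg N hN h
  have h2 := C.opp.step_top hp (C.rootless_opp hr) d hd (C.Gen_opp d hg) N hN
    (fun i hi => h (-i) (by rwa [abs_neg]))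
  refine hg N hN fun i hi => ?_
  by_cases hi' : |i| ≤ d - 1
  · exact h i hi'
  · have : |i| = d := by omega
    rcases (abs_eq (by omega)).1 this with rfl | rfl
    · exact h1
    · exact h2

lemma Gen_zero (C : GradedLCA L) (hp : C.Perfect) (hr : C.Rootless) (d : ℕ)
    (hg : C.Gen d) : C.Gen 0 := by
  induction d with
  | zero => exact_mod_cast hg
  | succ d ih =>
    apply ih
    have := C.Gen_step hp hr _ (by push_cast; omega) hg
    simpa using this

lemma exists_Gen (C : GradedLCA L) (hf : C.toLieConformalAlgebra.FiniteType) :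
    ∃ d : ℕ, C.Gen d := by
  obtain ⟨s, hs⟩ := hf
  have key : ∀ x : L, ∃ d : ℕ, ∀ N : Submodule ℂ L, (∀ i : ℤ, |i| ≤ d → C.G i ≤ N) → x ∈ N := by
    intro x
    refine C.hom_induction (p := fun x => ∃ d : ℕ, ∀ N : Submodule ℂ L,
      (∀ i : ℤ, |i| ≤ d → C.G i ≤ N) → x ∈ N) x ?_ ⟨0, fun N _ => N.zero_mem⟩ ?_
    · intro i x hx
      exact ⟨i.natAbs, fun N h => h i (by simp) hx⟩
    · rintro x y ⟨d, hd⟩ ⟨e, he⟩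
      refine ⟨max d e, fun N h => N.add_mem (hd N fun i hi => h i (hi.trans ?_))
        (he N fun i hi => h i (hi.trans ?_))⟩ <;> push_cast <;> simp
  choose f hf using key
  refine ⟨s.sup f, fun N hN h => hs N hN fun x hx => hf x N fun i hi => h i (hi.trans ?_)⟩
  exact_mod_cast Finset.le_sup (f := f) hx

end GradedLCA

/-- a nonzero perfect rootless `ℤ`-graded Lie conformal algebra
is not of finite type. -/
theorem perfect_rootless_not_finite_type
    {L : Type} [AddCommGroup L] [Module ℂ L] (C : GradedLCA L)
    (hnz : Nontrivial L) (hperf : C.Perfect) (hroot : C.Rootless) :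
    ¬ C.toLieConformalAlgebra.FiniteType := by
  intro hf
  obtain ⟨d, hd⟩ := C.exists_Gen hf
  have h0 := C.Gen_zero hperf hroot d hd
  have hG : C.G 0 = ⊤ := by
    refine h0 _ ⟨fun x hx => C.dGrade 0 x hx, fun n a ha b hb => ?_⟩ ?_
    · simpa using C.prdGrade 0 0 n a ha b hb
    · intro i hi
      have : i = 0 := abs_eq_zero.1 (le_antisymm hi (abs_nonneg i))
      rw [this]
  have hb : C.G 0 ≤ ⊥ := by
    refine C.nak hroot 0 ⊥ ?_ ?_
    · intro n a _ b hb
      rw [Submodule.mem_bot] at hb ⊢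
      rw [hb, map_zero]
    · refine le_trans ?_ le_sup_right
      rw [hG, ← hperf]
      refine Submodule.span_le.2 ?_
      rintro x ⟨n, a, b, rfl⟩
      refine Submodule.subset_span ⟨n, a, b, ?_, ?_, rfl⟩
      · rw [hperf]; trivial
      · rw [hperf]; trivial
  obtain ⟨x, hx⟩ := exists_ne (0 : L)
  apply hx
  have : x ∈ C.G 0 := by rw [hG]; trivial
  simpa using hb this
end
end

section
/- Let L = ⊕_{i∈ℤ} L_i be a rootless ℤ-graded Lie conformal algebra that is finitely generated as a ℂ[∂]-module, and let M be a graded L-module that is finitely generated as a ℂ[∂]-module and weightless. Then M is a nilpotent L-module. -/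
open scoped BigOperators Classical ENNReal
open Polynomial

noncomputable section

namespace RWN

/-- Abstract word lemma. -/
theorem pow_bot {A : Type} [Ring A] [Algebra ℂ A] (U V : Submodule ℂ A)
    (hUV : U * V ≤ V * U ⊔ U) (N K : ℕ) (hU : U ^ N = ⊥) (hV : V ^ K = ⊥) :
    (U ⊔ V) ^ (K * N) = ⊥ := by
  set X : Submodule ℂ A := 1 ⊔ (U ⊔ V) with hX
  have h1X : (1 : Submodule ℂ A) ≤ X := le_sup_left
  have hUX : U ≤ X := le_sup_left.trans le_sup_right
  have hVX : V ≤ X := le_sup_right.trans le_sup_right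
  have hU1 : U ≤ X * U := by
    calc U = 1 * U := (one_mul U).symm
      _ ≤ X * U := mul_le_mul' h1X le_rfl
  have c0 : U * X ≤ X * U := by
    rw [hX, Submodule.mul_sup, Submodule.mul_sup, ← hX]
    refine sup_le ?_ (sup_le ?_ ?_)
    · rw [mul_one]; exact hU1
    · exact mul_le_mul' hUX le_rfl
    · exact hUV.trans (sup_le (mul_le_mul' hVX le_rfl) hU1)
  have c1 : ∀ j : ℕ, U * X ^ j ≤ X ^ j * U := by
    intro j
    induction j with
    | zero => simp
    | succ j ih =>
      calc U * X ^ (j + 1) = (U * X ^ j) * X := by rw [pow_succ, mul_assoc]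
        _ ≤ (X ^ j * U) * X := mul_le_mul' ih le_rfl
        _ = X ^ j * (U * X) := by rw [mul_assoc]
        _ ≤ X ^ j * (X * U) := mul_le_mul' le_rfl c0
        _ = X ^ (j + 1) * U := by rw [pow_succ, mul_assoc]
  have c2 : ∀ j n : ℕ, U ^ n * X ^ j ≤ X ^ j * U ^ n := by
    intro j n
    induction n with
    | zero => simp
    | succ n ih =>
      calc U ^ (n + 1) * X ^ j = U ^ n * (U * X ^ j) := by rw [pow_succ, mul_assoc]
        _ ≤ U ^ n * (X ^ j * U) := mul_le_mul' le_rfl (c1 j)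
        _ = (U ^ n * X ^ j) * U := by rw [mul_assoc]
        _ ≤ (X ^ j * U ^ n) * U := mul_le_mul' ih le_rfl
        _ = X ^ j * U ^ (n + 1) := by rw [pow_succ, mul_assoc]
  have c3 : ∀ j : ℕ, (U ⊔ V) ^ j ≤ V ^ j ⊔ X ^ j * U := by
    intro j
    induction j with
    | zero => simp
    | succ j ih =>
      have hs : X ^ j * U ≤ X ^ (j + 1) * U := by
        calc X ^ j * U ≤ X ^ j * (X * U) := mul_le_mul' le_rfl hU1
          _ = X ^ (j + 1) * U := by rw [pow_succ, mul_assoc]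
      have hs2 : X ^ j * U * X ≤ X ^ (j + 1) * U := by
        calc X ^ j * U * X = X ^ j * (U * X) := by rw [mul_assoc]
          _ ≤ X ^ j * (X * U) := mul_le_mul' le_rfl c0
          _ = X ^ (j + 1) * U := by rw [pow_succ, mul_assoc]
      calc (U ⊔ V) ^ (j + 1) = (U ⊔ V) ^ j * (U ⊔ V) := pow_succ _ _
        _ ≤ (V ^ j ⊔ X ^ j * U) * (U ⊔ V) := mul_le_mul' ih le_rfl
        _ ≤ V ^ (j + 1) ⊔ X ^ (j + 1) * U := by
          rw [Submodule.sup_mul, Submodule.mul_sup (V ^ j)]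
          refine sup_le (sup_le ?_ ?_) ?_
          · refine le_sup_of_le_right (le_trans ?_ hs)
            exact mul_le_mul' (pow_le_pow_left' hVX j) le_rfl
          · rw [← pow_succ]; exact le_sup_left
          · refine le_sup_of_le_right (le_trans ?_ hs2)
            exact mul_le_mul' le_rfl le_sup_right
  have c4 : (U ⊔ V) ^ K ≤ X ^ K * U := by
    have := c3 K
    rwa [hV, bot_sup_eq] at this
  have c5 : ∀ n : ℕ, (U ⊔ V) ^ (K * n) ≤ X ^ (K * n) * U ^ n := by
    intro n
    induction n with
    | zero => simp
    | succ n ih =>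
      calc (U ⊔ V) ^ (K * (n + 1)) = (U ⊔ V) ^ (K * n) * (U ⊔ V) ^ K := by
            rw [← pow_add]; rfl
        _ ≤ (X ^ (K * n) * U ^ n) * (X ^ K * U) := mul_le_mul' ih c4
        _ = X ^ (K * n) * (U ^ n * X ^ K) * U := by simp only [mul_assoc]
        _ ≤ X ^ (K * n) * (X ^ K * U ^ n) * U :=
            mul_le_mul' (mul_le_mul' le_rfl (c2 K n)) le_rfl
        _ = X ^ (K * (n + 1)) * U ^ (n + 1) := by
            rw [Nat.mul_succ, pow_add, pow_succ U]; simp only [mul_assoc]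
  have := c5 N
  rw [hU, Submodule.mul_bot] at this
  exact le_bot_iff.mp this

/-- Noetherianity over `ℂ[∂]`. -/
theorem exists_max {L : Type} [AddCommGroup L] [Module ℂ L] (D : L →ₗ[ℂ] L)
    (hfg : ∃ s : Finset L, ∀ N : Submodule ℂ L, (∀ x ∈ N, D x ∈ N) →
      (s : Set L) ⊆ (N : Set L) → N = ⊤)
    (P : Submodule ℂ L → Prop) (hP : ∀ N, P N → ∀ x ∈ N, D x ∈ N) (hne : ∃ N, P N) :
    ∃ N, P N ∧ ∀ N', P N' → N ≤ N' → N' ≤ N := by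
  obtain ⟨s, hs⟩ := hfg
  let e : L ≃ₗ[ℂ] Module.AEval' D := Module.AEval'.of D
  have hD : ∀ x, e (D x) = (X : ℂ[X]) • e x := fun x => (Module.AEval'.X_smul_of D x).symm
  have hCs : ∀ (c : ℂ) (y : Module.AEval' D), (Polynomial.C c) • y = c • y := fun c y => by
    rw [← Polynomial.algebraMap_eq, algebraMap_smul]
  have hfin : Module.Finite ℂ[X] (Module.AEval' D) := by
    refine ⟨⟨s.image e, ?_⟩⟩
    set T := Submodule.span ℂ[X] ((s.image e : Finset _) : Set (Module.AEval' D)) with hT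
    have := hs ((T.restrictScalars ℂ).comap e.toLinearMap) (fun x hx => by
        change e (D x) ∈ T
        rw [hD]; exact T.smul_mem _ hx)
      (fun x hx => by
        change e x ∈ T
        exact Submodule.subset_span (by rw [Finset.coe_image]; exact ⟨x, hx, rfl⟩))
    rw [eq_top_iff]
    intro y _
    have h2 : e.symm y ∈ ((T.restrictScalars ℂ).comap e.toLinearMap) := by
      rw [this]; trivial
    have h3 : e (e.symm y) ∈ T := h2
    simpa using h3
  have hnoeth : IsNoetherian ℂ[X] (Module.AEval' D) := inferInstance
  -- translation
  let F : Submodule ℂ L → Submodule ℂ[X] (Module.AEval' D) :=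
    fun N => Submodule.span ℂ[X] (e '' N)
  have hF : ∀ N, (∀ x ∈ N, D x ∈ N) → ∀ x, e x ∈ F N → x ∈ N := by
    intro N hN x hx
    have key : ∀ y ∈ F N, e.symm y ∈ N := by
      intro y hy
      induction hy using Submodule.span_induction with
      | mem y hy => obtain ⟨z, hz, rfl⟩ := hy; simpa using hz
      | zero => simp
      | add y z _ _ h1 h2 => rw [map_add]; exact N.add_mem h1 h2
      | smul p y _ h =>
        induction p using Polynomial.induction_on' with
        | add p q hp hq => rw [add_smul, map_add]; exact N.add_mem hp hq
        | monomial n c =>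
          rw [← Polynomial.C_mul_X_pow_eq_monomial, mul_smul, hCs, map_smul]
          refine N.smul_mem _ ?_
          induction n with
          | zero => simpa using h
          | succ n ih =>
            rw [pow_succ', mul_smul]
            have := hD (e.symm ((X : ℂ[X]) ^ n • y))
            rw [LinearEquiv.apply_symm_apply] at this
            rw [← this, LinearEquiv.symm_apply_apply]
            exact hN _ ih
    simpa using key _ hx
  have hmono : ∀ N N', N ≤ N' → F N ≤ F N' := fun N N' h =>
    Submodule.span_mono (Set.image_mono h)
  have hwf : WellFounded ((· > ·) : Submodule ℂ[X] (Module.AEval' D) → _ → Prop) :=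
    wellFounded_gt
  obtain ⟨N0, hN0⟩ := hne
  obtain ⟨T, ⟨N, hPN, rfl⟩, hmin⟩ := hwf.has_min (F '' {N | P N}) ⟨F N0, N0, hN0, rfl⟩
  refine ⟨N, hPN, fun N' hPN' hle x hx => ?_⟩
  have h1 : F N' ≤ F N := by
    by_contra hcon
    exact hmin (F N') ⟨N', hPN', rfl⟩ (lt_of_le_not_ge (hmono _ _ hle) hcon)
  exact hF N (hP N hPN) x (h1 (Submodule.subset_span ⟨x, hx, rfl⟩))

/-- `ℂ[∂]`-span. -/
def cl {L : Type} [AddCommGroup L] [Module ℂ L] (D : L →ₗ[ℂ] L) (S : Set L) : Submodule ℂ L :=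
  sInf {N | (∀ x ∈ N, D x ∈ N) ∧ S ⊆ (N : Set L)}

theorem cl_le {L : Type} [AddCommGroup L] [Module ℂ L] {D : L →ₗ[ℂ] L} {S : Set L}
    {N : Submodule ℂ L} (h : ∀ x ∈ N, D x ∈ N) (hS : S ⊆ (N : Set L)) : cl D S ≤ N :=
  sInf_le ⟨h, hS⟩

theorem subset_cl {L : Type} [AddCommGroup L] [Module ℂ L] (D : L →ₗ[ℂ] L) (S : Set L) :
    S ⊆ (cl D S : Set L) := by
  intro x hx
  simp only [cl, SetLike.mem_coe, Submodule.mem_sInf]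
  exact fun N hN => hN.2 hx

theorem cl_stable {L : Type} [AddCommGroup L] [Module ℂ L] (D : L →ₗ[ℂ] L) (S : Set L) :
    ∀ x ∈ cl D S, D x ∈ cl D S := by
  intro x hx
  simp only [cl, Submodule.mem_sInf] at hx ⊢
  exact fun N hN => hN.1 _ (hx N hN)

section Mods

variable {L : Type} [AddCommGroup L] [Module ℂ L]
variable {M : Type} [AddCommGroup M] [Module ℂ M]

theorem e0 (W : Submodule ℂ (Module.End ℂ M)) : W ^ 0 = 1 := pow_zero W
theorem es (W : Submodule ℂ (Module.End ℂ M)) (n : ℕ) : W ^ (n + 1) = W ^ n * W := pow_succ W n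
theorem es' (W : Submodule ℂ (Module.End ℂ M)) (n : ℕ) : W ^ (n + 1) = W * W ^ n := pow_succ' W n
theorem ea (W : Submodule ℂ (Module.End ℂ M)) (m n : ℕ) : W ^ (m + n) = W ^ m * W ^ n :=
  pow_add W m n

/-- The span of the operators `a_(n)`, `a ∈ S`. -/
def opsp {C : LieConformalAlgebra L} (ρ : LCAModule C M) (S : Set L) :
    Submodule ℂ (Module.End ℂ M) :=
  Submodule.span ℂ {f | ∃ a ∈ S, ∃ n : ℕ, f = ρ.act n a}

theorem act_mem_opsp {C : LieConformalAlgebra L} (ρ : LCAModule C M) (S : Set L) (n : ℕ) (a : L)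
    (ha : a ∈ cl C.D S) : ρ.act n a ∈ opsp ρ S := by
  let N : Submodule ℂ L := ⨅ n : ℕ, (opsp ρ S).comap (ρ.act n)
  have hN : ∀ x, x ∈ N ↔ ∀ n, ρ.act n x ∈ opsp ρ S := by
    intro x; simp [N, Submodule.mem_iInf]
  have h : cl C.D S ≤ N := by
    refine cl_le (fun x hx => ?_) (fun x hx => ?_)
    · rw [hN] at hx ⊢
      intro n
      have : ρ.act n (C.D x) = (-(n : ℂ)) • ρ.act (n - 1) x := by
        ext m; simp [ρ.sesq]
      rw [this]
      exact Submodule.smul_mem _ _ (hx _)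
    · rw [SetLike.mem_coe, hN]
      exact fun n => Submodule.subset_span ⟨x, hx, n, rfl⟩
  exact (hN a).1 (h ha) n

theorem opsp_comm {C : LieConformalAlgebra L} (ρ : LCAModule C M) (S : Set L) (a : L)
    (h : ∀ s ∈ S, ∀ n, C.prd n s a ∈ cl C.D S) :
    opsp ρ S * opsp ρ {a} ≤ opsp ρ {a} * opsp ρ S ⊔ opsp ρ S := by
  conv_lhs => rw [opsp, opsp, Submodule.span_mul_span]
  rw [Submodule.span_le]
  rintro _ ⟨_, ⟨s, hs, p, rfl⟩, _, ⟨b, hb, q, rfl⟩, rfl⟩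
  rw [Set.mem_singleton_iff] at hb
  subst hb
  have : ρ.act p s * ρ.act q b = ρ.act q b * ρ.act p s +
      ∑ j ∈ Finset.range (p + 1), (Nat.choose p j : ℂ) • ρ.act (p + q - j) (C.prd j s b) := by
    ext m
    have := ρ.comm p q s b m
    rw [sub_eq_iff_eq_add'] at this
    simpa [LinearMap.sum_apply] using this
  change ρ.act p s * ρ.act q b ∈ _
  rw [this]
  refine Submodule.add_mem_sup (Submodule.mul_mem_mul ?_ ?_) (Submodule.sum_mem _ fun j _ =>
    Submodule.smul_mem _ _ (act_mem_opsp ρ S _ _ (h s hs j)))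
  · exact Submodule.subset_span ⟨b, rfl, q, rfl⟩
  · exact Submodule.subset_span ⟨s, hs, p, rfl⟩

theorem opsp_insert {C : LieConformalAlgebra L} (ρ : LCAModule C M) (S : Set L) (a : L) :
    opsp ρ (insert a S) ≤ opsp ρ S ⊔ opsp ρ {a} := by
  rw [opsp, Submodule.span_le]
  rintro _ ⟨b, hb, n, rfl⟩
  rcases hb with rfl | hb
  · exact Submodule.mem_sup_right (Submodule.subset_span ⟨b, rfl, n, rfl⟩)
  · exact Submodule.mem_sup_left (Submodule.subset_span ⟨b, hb, n, rfl⟩)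

theorem iterAct_mem {C : LieConformalAlgebra L} (ρ : LCAModule C M) (W : Submodule ℂ (Module.End ℂ M))
    (hW : ∀ n a, ρ.act n a ∈ W) (l : List (L × ℕ)) :
    ∃ f ∈ W ^ l.length, ∀ m, ρ.iterAct l m = f m := by
  induction l with
  | nil => exact ⟨1, by simp [Submodule.one_le.mp le_rfl], fun m => rfl⟩
  | cons q t ih =>
    obtain ⟨f, hf, hfm⟩ := ih
    refine ⟨ρ.act q.2 q.1 * f, ?_, fun m => ?_⟩
    · rw [List.length_cons, es']
      exact Submodule.mul_mem_mul (hW _ _) hf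
    · obtain ⟨a, k⟩ := q
      simp [LCAModule.iterAct, hfm]

/-- Elements of powers of `opsp` are spanned by words. -/
theorem opsp_pow_le {C : LieConformalAlgebra L} (ρ : LCAModule C M) (S : Set L) (n : ℕ) :
    opsp ρ S ^ n ≤ Submodule.span ℂ {f | ∃ l : List (L × ℕ), l.length = n ∧ (∀ q ∈ l, q.1 ∈ S) ∧
      ∀ m, ρ.iterAct l m = f m} := by
  induction n with
  | zero =>
    rw [e0, Submodule.one_le]
    exact Submodule.subset_span ⟨[], rfl, by simp, fun m => rfl⟩
  | succ n ih =>
    rw [es']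
    refine (mul_le_mul' le_rfl ih).trans ?_
    rw [opsp, Submodule.span_mul_span]
    refine Submodule.span_mono ?_
    rintro _ ⟨_, ⟨a, ha, k, rfl⟩, f, ⟨l, hl, hlS, hf⟩, rfl⟩
    refine ⟨(a, k) :: l, by simp [hl], ?_, fun m => ?_⟩
    · intro q hq
      rcases List.mem_cons.1 hq with rfl | hq
      · exact ha
      · exact hlS q hq
    · simp [LCAModule.iterAct, hf]

variable {C : GradedLCA L}

theorem finite_support (ρ : GradedLCAModule C M) (hfg : ρ.toLCAModule.FGPoly) :
    ∃ T : Finset ℤ, (⨆ i ∈ T, ρ.GM i) = ⊤ := by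
  obtain ⟨s, hs⟩ := hfg
  have hx : ∀ x : M, ∃ T : Finset ℤ, x ∈ ⨆ i ∈ T, ρ.GM i := by
    intro x
    have : x ∈ ⨆ i, ρ.GM i := by rw [ρ.internal.submodule_iSup_eq_top]; trivial
    rw [Submodule.mem_iSup_iff_exists_finset] at this
    exact this
  choose T hT using hx
  refine ⟨s.biUnion T, hs _ ?_ ?_⟩
  · have : (⨆ i ∈ s.biUnion T, ρ.GM i) ≤ (⨆ i ∈ s.biUnion T, ρ.GM i).comap ρ.DM := by
      refine iSup₂_le fun i hi m hm => ?_
      exact Submodule.mem_iSup_of_mem i (Submodule.mem_iSup_of_mem hi (ρ.dGrade i m hm))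
    exact fun m hm => this hm
  · intro x hx
    have hle : (⨆ i ∈ T x, ρ.GM i) ≤ ⨆ i ∈ s.biUnion T, ρ.GM i :=
      biSup_mono fun i hi => Finset.mem_biUnion.2 ⟨x, hx, hi⟩
    exact hle (hT x)

theorem bounded (ρ : GradedLCAModule C M) (hfg : ρ.toLCAModule.FGPoly) :
    ∃ B : ℕ, ∀ i : ℤ, (B : ℤ) < |i| → ρ.GM i = ⊥ := by
  obtain ⟨T, hT⟩ := finite_support ρ hfg
  refine ⟨T.sup Int.natAbs, fun i hi => ?_⟩
  have hiT : i ∉ T := by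
    intro h
    have : i.natAbs ≤ T.sup Int.natAbs := Finset.le_sup (f := Int.natAbs) h
    rw [Int.abs_eq_natAbs] at hi
    omega
  have hind := ρ.internal.submodule_iSupIndep i
  have htop : (⨆ j, ⨆ (_ : j ≠ i), ρ.GM j) = ⊤ := by
    rw [eq_top_iff, ← hT]
    refine iSup₂_le fun j hj => ?_
    exact le_iSup₂_of_le j (fun h => hiT (h ▸ hj)) le_rfl
  rw [htop, disjoint_top] at hind
  exact hind

/-- Operators of degree `k`. -/
def degOp (ρ : GradedLCAModule C M) (k : ℤ) : Submodule ℂ (Module.End ℂ M) where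
  carrier := {f | ∀ j, ∀ m ∈ ρ.GM j, f m ∈ ρ.GM (k + j)}
  add_mem' := fun hf hg j m hm => Submodule.add_mem _ (hf j m hm) (hg j m hm)
  zero_mem' := fun j m _ => Submodule.zero_mem _
  smul_mem' := fun c f hf j m hm => Submodule.smul_mem _ c (hf j m hm)

theorem nil_single (ρ : GradedLCAModule C M) (hfg : ρ.toLCAModule.FGPoly) (a : L) (i : ℤ)
    (hi : i ≠ 0) (ha : a ∈ C.G i) : ∃ K, opsp ρ.toLCAModule {a} ^ K = ⊥ := by
  obtain ⟨B, hB⟩ := bounded ρ hfg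
  have h1 : opsp ρ.toLCAModule {a} ≤ degOp ρ i := by
    rw [opsp, Submodule.span_le]
    rintro _ ⟨b, rfl, n, rfl⟩ j m hm
    exact ρ.actGrade i j n b ha m hm
  have h2 : ∀ K : ℕ, opsp ρ.toLCAModule {a} ^ K ≤ degOp ρ (K * i) := by
    intro K
    induction K with
    | zero =>
      rw [e0, Submodule.one_le]
      intro j m hm
      simpa using hm
    | succ K ih =>
      rw [es', Submodule.mul_le]
      intro f hf g hg j m hm
      have := h1 hf _ _ (ih hg j m hm)
      have e : ((K + 1 : ℕ) : ℤ) * i + j = i + (K * i + j) := by push_cast; ring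
      rw [e]
      exact this
  refine ⟨2 * B + 1, le_bot_iff.1 fun f hf => ?_⟩
  have hf := h2 _ hf
  rw [Submodule.mem_bot]
  have hk : (⊤ : Submodule ℂ M) ≤ LinearMap.ker f := by
    rw [← ρ.internal.submodule_iSup_eq_top]
    refine iSup_le fun j m hm => ?_
    rw [LinearMap.mem_ker]
    by_cases hj : (B : ℤ) < |j|
    · rw [hB j hj, Submodule.mem_bot] at hm
      rw [hm, map_zero]
    · have h3 := hf j m hm
      rw [hB, Submodule.mem_bot] at h3
      · exact h3
      · have h4 : |((2 * B + 1 : ℕ) : ℤ) * i| ≥ 2 * B + 1 := by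
          rw [abs_mul]
          have : 1 ≤ |i| := Int.one_le_abs hi
          have h5 : |((2 * B + 1 : ℕ) : ℤ)| = 2 * B + 1 := by
            rw [abs_of_nonneg (by positivity)]; push_cast; ring
          rw [h5]; nlinarith
        have h5 := abs_sub_abs_le_abs_sub (((2 * B + 1 : ℕ) : ℤ) * i) (-j)
        rw [abs_neg, sub_neg_eq_add] at h5
        omega
  ext m
  exact hk (Submodule.mem_top)

theorem nil_zero (ρ : GradedLCAModule C M) (hfg : ρ.toLCAModule.FGPoly) (hwl : ρ.Weightless) :
    ∃ K, opsp ρ.toLCAModule (C.G 0 : Set L) ^ K = ⊥ := by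
  obtain ⟨T, hT⟩ := finite_support ρ hfg
  choose n hn1 hn using hwl
  have hz : ∀ i, ∀ f ∈ opsp ρ.toLCAModule (C.G 0 : Set L) ^ (n i), ∀ m ∈ ρ.GM i, f m = 0 := by
    intro i f hf
    have := opsp_pow_le _ _ _ hf
    clear hf
    induction this using Submodule.span_induction with
    | mem f hf =>
      obtain ⟨l, hl, hlS, hlf⟩ := hf
      intro m hm
      rw [← hlf]
      exact hn i l hl hlS m hm
    | zero => intro m _; rfl
    | add f g _ _ hf hg => intro m hm; simp [hf m hm, hg m hm]
    | smul c f _ hf => intro m hm; simp [hf m hm]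
  refine ⟨T.sup n, le_bot_iff.1 fun f hf => ?_⟩
  rw [Submodule.mem_bot]
  have hk : (⊤ : Submodule ℂ M) ≤ LinearMap.ker f := by
    rw [← hT]
    refine iSup₂_le fun i hi m hm => ?_
    rw [LinearMap.mem_ker]
    have hle : n i ≤ T.sup n := Finset.le_sup hi
    obtain ⟨k, hk⟩ := Nat.exists_eq_add_of_le' hle
    rw [hk, ea] at hf
    induction hf using Submodule.mul_induction_on' with
    | mem_mul_mem f _ g hg => simp [hz i g hg m hm]
    | add f _ g _ hf hg => simp [hf, hg]
  ext m
  exact hk (Submodule.mem_top)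

/-- The adjoint module. -/
def adj (C : GradedLCA L) : GradedLCAModule C L where
  DM := C.D
  act := C.prd
  bound := C.bound
  sesq := C.sesq
  sesq' := C.sesq'
  comm := C.jacobi
  GM := C.G
  internal := C.internal
  dGrade := C.dGrade
  actGrade := C.prdGrade

theorem adj_iter (C : GradedLCA L) (l : List (L × ℕ)) (x : L) :
    (adj C).toLCAModule.iterAct l x = C.toLieConformalAlgebra.iterPrd l x := by
  induction l with
  | nil => rfl
  | cons q t ih =>
    obtain ⟨a, k⟩ := q
    simp only [LCAModule.iterAct, LieConformalAlgebra.iterPrd, ih]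
    rfl

theorem adj_weightless (C : GradedLCA L) (h : C.Rootless) : (adj C).Weightless := by
  intro i
  obtain ⟨n, hn, hh⟩ := h i
  refine ⟨n, hn, fun l hl hq m hm => ?_⟩
  rw [adj_iter]
  exact hh l hl hq m hm

theorem find_elt (C : GradedLCA L) (S : Set L) (hS : ∀ s ∈ S, ∃ i, s ∈ C.G i)
    (H : Submodule ℂ L) (n : ℕ) : ∀ x : L, (∃ i, x ∈ C.G i) → x ∉ H →
    (∀ f ∈ opsp (adj C).toLCAModule S ^ n, f x ∈ H) →
    ∃ a, (∃ i, a ∈ C.G i) ∧ a ∉ H ∧ ∀ s ∈ S, ∀ n, C.prd n s a ∈ H := by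
  induction n with
  | zero =>
    intro x _ hxH h
    exact absurd (h 1 (by simp [Submodule.one_le.mp le_rfl])) hxH
  | succ n ih =>
    intro x hx hxH h
    by_cases hc : ∀ s ∈ S, ∀ n, C.prd n s x ∈ H
    · exact ⟨x, hx, hxH, hc⟩
    · push Not at hc
      obtain ⟨s, hs, k, hk⟩ := hc
      obtain ⟨i, hi⟩ := hx
      obtain ⟨j, hj⟩ := hS s hs
      refine ih (C.prd k s x) ⟨j + i, C.prdGrade j i k s hj x hi⟩ hk fun f hf => ?_
      refine h (f * (adj C).act k s) ?_
      rw [es]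
      exact Submodule.mul_mem_mul hf (Submodule.subset_span ⟨s, hs, k, rfl⟩)

theorem step (ρ : GradedLCAModule C M) (hfg : ρ.toLCAModule.FGPoly) (S : Set L) (a : L) (i : ℤ)
    (hi : i ≠ 0) (ha : a ∈ C.G i) (h : ∀ s ∈ S, ∀ n, C.prd n s a ∈ cl C.D S)
    (hn : ∃ N, opsp ρ.toLCAModule S ^ N = ⊥) :
    ∃ N, opsp ρ.toLCAModule (insert a S) ^ N = ⊥ := by
  obtain ⟨N, hN⟩ := hn
  obtain ⟨K, hK⟩ := nil_single ρ hfg a i hi ha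
  have := pow_bot _ _ (opsp_comm ρ.toLCAModule S a h) N K hN hK
  exact ⟨K * N, le_bot_iff.1 (this ▸ pow_le_pow_left' (opsp_insert ρ.toLCAModule S a) _)⟩

end Mods

end RWN

/-- if `L` is a rootless `ℤ`-graded Lie conformal algebra which is
finitely generated as a `ℂ[∂]`-module, and `M` is a graded `L`-module, finitely
generated as a `ℂ[∂]`-module and weightless, then `M` is a nilpotent
`L`-module. -/
theorem rootless_weightless_nilpotent
    {L : Type} [AddCommGroup L] [Module ℂ L] {M : Type} [AddCommGroup M] [Module ℂ M]
    (C : GradedLCA L) (hroot : C.Rootless)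
    (hfgL : C.toLieConformalAlgebra.FGPolyModule)
    (ρ : GradedLCAModule C M) (hfgM : ρ.toLCAModule.FGPoly) (hwl : ρ.Weightless) :
    ρ.toLCAModule.Nilpotent := by
  classical
  have hadj := RWN.adj_weightless C hroot
  have hfgA : (RWN.adj C).toLCAModule.FGPoly := hfgL
  let Good : Set L → Prop := fun S => (∀ s ∈ S, ∃ i, s ∈ C.G i) ∧ (C.G 0 : Set L) ⊆ S ∧
    (∃ N, RWN.opsp (RWN.adj C).toLCAModule S ^ N = ⊥) ∧ ∃ N, RWN.opsp ρ.toLCAModule S ^ N = ⊥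
  obtain ⟨H, ⟨S, hS, rfl⟩, hmax⟩ := RWN.exists_max C.D hfgL
    (fun H => ∃ S, Good S ∧ H = RWN.cl C.D S)
    (by rintro _ ⟨S, _, rfl⟩; exact RWN.cl_stable C.D S)
    ⟨_, (C.G 0 : Set L), ⟨fun s hs => ⟨0, hs⟩, subset_rfl, RWN.nil_zero _ hfgA hadj,
      RWN.nil_zero _ hfgM hwl⟩, rfl⟩
  obtain ⟨hhom, h0, hnA, hnM⟩ := hS
  have htop : RWN.cl C.D S = ⊤ := by
    by_contra hne
    have : ∃ i, ∃ x ∈ C.G i, x ∉ RWN.cl C.D S := by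
      by_contra hcon
      push Not at hcon
      apply hne
      rw [eq_top_iff, ← C.internal.submodule_iSup_eq_top]
      exact iSup_le fun i x hx => hcon i x hx
    obtain ⟨i0, x, hx, hxH⟩ := this
    have hnA2 := hnA
    obtain ⟨N, hN⟩ := hnA2
    obtain ⟨a, ⟨i, hai⟩, haH, hcomm⟩ := RWN.find_elt C S hhom (RWN.cl C.D S) N x ⟨i0, hx⟩ hxH
      (by
        intro f hf
        rw [hN, Submodule.mem_bot] at hf
        rw [hf]; exact Submodule.zero_mem _)
    have hi : i ≠ 0 := by
      rintro rfl
      exact haH (RWN.subset_cl C.D S (h0 hai))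
    refine haH (hmax (RWN.cl C.D (insert a S)) ⟨insert a S, ⟨?_, ?_, ?_, ?_⟩, rfl⟩ ?_ ?_)
    · rintro s (rfl | hs)
      · exact ⟨i, hai⟩
      · exact hhom s hs
    · exact h0.trans (Set.subset_insert _ _)
    · exact RWN.step _ hfgA S a i hi hai hcomm hnA
    · exact RWN.step _ hfgM S a i hi hai hcomm hnM
    · exact RWN.cl_le (RWN.cl_stable _ _) ((Set.subset_insert _ _).trans (RWN.subset_cl _ _))
    · exact RWN.subset_cl _ _ (Set.mem_insert _ _)
  obtain ⟨N, hN⟩ := hnM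
  refine ⟨N + 1, by omega, fun l hl m => ?_⟩
  obtain ⟨f, hf, hfm⟩ := RWN.iterAct_mem ρ.toLCAModule (RWN.opsp ρ.toLCAModule S)
    (fun n a => RWN.act_mem_opsp _ _ _ _ (by rw [htop]; trivial)) l
  rw [hl, RWN.es, hN, Submodule.bot_mul, Submodule.mem_bot] at hf
  rw [hfm, hf]; rfl
end
end

section
/- Let L = ⊕_{i∈ℤ} L_i be a ℤ-graded Lie conformal algebra that is generated, as a Lie conformal algebra, by ⊕_{|i|≤d} L_i for some positive integer d, and let M be a graded L-module that is finitely generated as an L-module and has infinite rank as a ℂ[∂]-module. Then e(M) ≥ 1/d. -/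
open scoped BigOperators Classical ENNReal
open Polynomial

noncomputable section

namespace EMProof

variable {L : Type} [AddCommGroup L] [Module ℂ L] {M : Type} [AddCommGroup M] [Module ℂ M]

lemma sum_eq_aeval (D : M →ₗ[ℂ] M) (q : Polynomial ℂ) (m : M) :
    (q.sum fun t c => c • (⇑D)^[t] m) = (aeval D q) m := by
  rw [aeval_eq_sum_range, Polynomial.sum_over_range]
  · simp [LinearMap.sum_apply, Module.End.pow_apply]
  · intro n; simp

lemma aeval_mem (D : M →ₗ[ℂ] M) (N : Submodule ℂ M) (h : ∀ x ∈ N, D x ∈ N)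
    (q : Polynomial ℂ) (m : M) (hm : m ∈ N) : (aeval D q) m ∈ N := by
  have hp : ∀ k : ℕ, (D ^ k) m ∈ N := by
    intro k
    induction k with
    | zero => simpa using hm
    | succ k ih => rw [pow_succ']; exact h _ ih
  rw [aeval_eq_sum_range, LinearMap.sum_apply]
  exact N.sum_mem fun i _ => N.smul_mem _ (hp i)

lemma act_pow {C : LieConformalAlgebra L} (ρ : LCAModule C M) (a : L) (m : M) (N : ℕ)
    (hN : ∀ k, N < k → ρ.act k a m = 0) (t : ℕ) :
    (∀ k, N + t < k → ρ.act k a ((ρ.DM ^ t) m) = 0) ∧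
    ∃ c : ℂ, c ≠ 0 ∧ ρ.act (N + t) a ((ρ.DM ^ t) m) = c • ρ.act N a m := by
  induction t with
  | zero => exact ⟨by simpa using hN, 1, one_ne_zero, by simp⟩
  | succ t ih =>
    obtain ⟨h1, c, hc, h2⟩ := ih
    have e : (ρ.DM ^ (t+1)) m = ρ.DM ((ρ.DM ^ t) m) := by rw [pow_succ']; rfl
    constructor
    · intro k hk
      rw [e, ρ.sesq', h1 k (by omega), h1 (k-1) (by omega)]
      simp
    · refine ⟨((N + (t+1) : ℕ) : ℂ) * c, mul_ne_zero ?_ hc, ?_⟩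
      · exact Nat.cast_ne_zero.mpr (by omega)
      · rw [e, ρ.sesq', h1 _ (by omega), show N + (t+1) - 1 = N + t by omega, h2, mul_smul]
        simp

lemma act_torsion {C : LieConformalAlgebra L} (ρ : LCAModule C M) (m : M)
    (p : Polynomial ℂ) (hp : p ≠ 0) (h : (aeval ρ.DM p) m = 0) (a : L) (n : ℕ) :
    ρ.act n a m = 0 := by
  obtain ⟨B, hB⟩ := ρ.bound a m
  -- descending induction
  have key : ∀ N : ℕ, (∀ k, N < k → ρ.act k a m = 0) → ρ.act N a m = 0 := by
    intro N hN
    have h0 : ρ.act (N + p.natDegree) a ((aeval ρ.DM p) m) = 0 := by rw [h]; simp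
    rw [aeval_eq_sum_range, LinearMap.sum_apply, map_sum, Finset.sum_range_succ,
      Finset.sum_eq_zero] at h0
    · obtain ⟨c, hc, h2⟩ := (act_pow ρ a m N hN p.natDegree).2
      rw [LinearMap.smul_apply, map_smul, h2, zero_add] at h0
      simpa [hp, hc] using h0
    · intro t ht
      rw [Finset.mem_range] at ht
      rw [LinearMap.smul_apply, map_smul, (act_pow ρ a m N hN t).1 _ (by omega), smul_zero]
  have : ∀ j k : ℕ, B ≤ k + j → ρ.act k a m = 0 := by
    intro j
    induction j with
    | zero => intro k hk; exact hB k (by omega)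
    | succ j ih => 
      intro k hk
      exact key k fun k' hk' => ih k' (by omega)
  exact this B n (by omega)

/-- stabilizer -/
def stab {C : LieConformalAlgebra L} (ρ : LCAModule C M) (N : Submodule ℂ M) : Submodule ℂ L where
  carrier := {a | ∀ k, ∀ m ∈ N, ρ.act k a m ∈ N}
  add_mem' := by
    intro a b ha hb k m hm
    rw [map_add]
    exact N.add_mem (ha k m hm) (hb k m hm)
  zero_mem' := by intro k m hm; simp
  smul_mem' := by
    intro c a ha k m hm
    rw [map_smul]
    exact N.smul_mem _ (ha k m hm)

lemma stab_sub {C : LieConformalAlgebra L} (ρ : LCAModule C M) (N : Submodule ℂ M) :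
    C.IsSubalgebra (stab ρ N) := by
  constructor
  · intro a ha k m hm
    rw [ρ.sesq]
    exact N.smul_mem _ (ha _ m hm)
  · intro p a ha b hb
    induction p using Nat.strong_induction_on with
    | _ p ih =>
      intro q m hm
      have h := ρ.comm p q a b m
      rw [Finset.sum_range_succ] at h
      have e : ρ.act q (C.prd p a b) m = (ρ.act p a (ρ.act q b m) - ρ.act q b (ρ.act p a m))
          - ∑ j ∈ Finset.range p, (Nat.choose p j : ℂ) • ρ.act (p + q - j) (C.prd j a b) m := by
        rw [h]; simp
      rw [e]
      refine N.sub_mem (N.sub_mem (ha _ _ (hb _ _ hm)) (hb _ _ (ha _ _ hm))) (N.sum_mem ?_)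
      intro j hj
      exact N.smul_mem _ (ih j (Finset.mem_range.mp hj) _ m hm)

variable {C : GradedLCA L}

lemma GM_le_seg (ρ : GradedLCAModule C M) (n : ℕ) (i : ℤ) (hi : |i| ≤ (n : ℤ)) :
    ρ.GM i ≤ ρ.seg n := le_iSup₂_of_le i hi le_rfl

lemma seg_mono (ρ : GradedLCAModule C M) {n k : ℕ} (h : n ≤ k) : ρ.seg n ≤ ρ.seg k :=
  iSup₂_le fun i hi => GM_le_seg ρ k i (by omega)

lemma seg_D (ρ : GradedLCAModule C M) (n : ℕ) (x : M) (hx : x ∈ ρ.seg n) : ρ.DM x ∈ ρ.seg n := by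
  have : ρ.seg n ≤ (ρ.seg n).comap ρ.DM :=
    iSup₂_le fun i hi x hx => GM_le_seg ρ n i hi (ρ.dGrade i x hx)
  exact this hx

lemma exists_seg (ρ : GradedLCAModule C M) (x : M) : ∃ n, x ∈ ρ.seg n := by
  have h : x ∈ ⨆ i, ρ.GM i := by rw [ρ.internal.submodule_iSup_eq_top]; trivial
  induction h using Submodule.iSup_induction' with
  | mem i x hx => exact ⟨i.natAbs, GM_le_seg ρ _ i (by simp) hx⟩
  | zero => exact ⟨0, zero_mem _⟩
  | add x y _ _ hx hy =>
    obtain ⟨n, hn⟩ := hx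
    obtain ⟨k, hk⟩ := hy
    exact ⟨max n k, add_mem (seg_mono ρ (le_max_left _ _) hn) (seg_mono ρ (le_max_right _ _) hk)⟩

lemma exists_seg_finset (ρ : GradedLCAModule C M) (s : Finset M) :
    ∃ n, (s : Set M) ⊆ (ρ.seg n : Set M) := by
  choose f hf using exists_seg ρ
  exact ⟨s.sup f, fun x hx => seg_mono ρ (Finset.le_sup (f := f) hx) (hf x)⟩

lemma step (d : ℕ)
    (hgen : ∀ N : Submodule ℂ L, C.toLieConformalAlgebra.IsSubalgebra N →
      (∀ i : ℤ, |i| ≤ (d : ℤ) → C.G i ≤ N) → N = ⊤)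
    (ρ : GradedLCAModule C M) (s : Finset M)
    (hs : ∀ N : Submodule ℂ M, ρ.toLCAModule.IsSub N → (s : Set M) ⊆ (N : Set M) → N = ⊤)
    (hinf : ∀ r : ℕ, ∃ v : Fin r → M, polyIndep ρ.DM v) (n : ℕ)
    (hn : (s : Set M) ⊆ (ρ.seg n : Set M)) (r : ℕ)
    (h : ∃ v : Fin r → M, (∀ k, v k ∈ ρ.seg n) ∧ polyIndep ρ.DM v) :
    ∃ v : Fin (r + 1) → M, (∀ k, v k ∈ ρ.seg (n + d)) ∧ polyIndep ρ.DM v := by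
  by_cases ht : ∀ i : ℤ, (n : ℤ) < |i| → |i| ≤ ((n + d : ℕ) : ℤ) → ∀ m ∈ ρ.GM i,
      ∃ p : Polynomial ℂ, p ≠ 0 ∧ (aeval ρ.DM p) m = 0
  · have htop : ρ.seg (n + d) = ⊤ := by
      apply hs
      · refine ⟨seg_D ρ _, ?_⟩
        have : stab ρ.toLCAModule (ρ.seg (n + d)) = ⊤ := by
          apply hgen _ (stab_sub _ _)
          intro i hi a ha k
          have : ρ.seg (n + d) ≤ (ρ.seg (n + d)).comap (ρ.act k a) := by
            refine iSup₂_le fun j hj m hm => ?_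
            rw [Submodule.mem_comap]
            by_cases hjn : |j| ≤ (n : ℤ)
            · refine GM_le_seg ρ (n + d) (i + j) ?_ (ρ.actGrade i j k a ha m hm)
              push_cast
              exact (abs_add_le i j).trans (by omega)
            · obtain ⟨p, hp, hpm⟩ := ht j (by omega) hj m hm
              rw [act_torsion ρ.toLCAModule m p hp hpm a k]
              exact zero_mem _
          exact fun m hm => this hm
        intro k a m hm
        have ha : a ∈ stab ρ.toLCAModule (ρ.seg (n + d)) := by rw [this]; trivial
        exact ha k m hm
      · exact hn.trans (seg_mono ρ (by omega))
    obtain ⟨v, hv⟩ := hinf (r + 1)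
    exact ⟨v, fun k => by rw [htop]; trivial, hv⟩
  · push Not at ht
    obtain ⟨i, hi1, hi2, m, hm, hmt⟩ := ht
    obtain ⟨v, hv, hvi⟩ := h
    refine ⟨Fin.cons m v, ?_, ?_⟩
    · intro k
      refine Fin.cases ?_ (fun k => ?_) k
      · exact GM_le_seg ρ _ i hi2 hm
      · exact seg_mono ρ (by omega) (hv k)
    · intro q hq
      rw [Fin.sum_univ_succ] at hq
      simp only [Fin.cons_zero, Fin.cons_succ] at hq
      have h1 : ((q 0).sum fun t c => c • (⇑ρ.DM)^[t] m) ∈ ρ.GM i := by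
        rw [sum_eq_aeval]; exact aeval_mem _ _ (ρ.dGrade i) _ _ hm
      have h2 : (∑ k : Fin r, (q k.succ).sum fun t c => c • (⇑ρ.DM)^[t] (v k)) ∈ ρ.seg n := by
        refine Submodule.sum_mem _ fun k _ => ?_
        rw [sum_eq_aeval]; exact aeval_mem _ _ (seg_D ρ n) _ _ (hv k)
      have hdis : Disjoint (ρ.GM i) (ρ.seg n) := by
        refine (ρ.internal.submodule_iSupIndep i).mono_right (iSup₂_le fun j hj => ?_)
        refine le_iSup₂_of_le j ?_ le_rfl
        rintro rfl
        omega
      have h3 : ((q 0).sum fun t c => c • (⇑ρ.DM)^[t] m) = 0 := by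
        refine Submodule.disjoint_def.mp hdis _ h1 ?_
        rw [eq_neg_of_add_eq_zero_left hq]
        exact neg_mem h2
      rw [h3, zero_add] at hq
      have h4 := hvi _ hq
      intro k
      refine Fin.cases ?_ (fun k => h4 k) k
      by_contra h0
      exact hmt _ h0 (by rw [← sum_eq_aeval]; exact h3)

end EMProof

theorem eM_ge_one_div_d
    {L : Type} [AddCommGroup L] [Module ℂ L] {M : Type} [AddCommGroup M] [Module ℂ M]
    (C : GradedLCA L) (d : ℕ) (hd : 1 ≤ d)
    (hgen : ∀ N : Submodule ℂ L, C.toLieConformalAlgebra.IsSubalgebra N →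
      (∀ i : ℤ, |i| ≤ (d : ℤ) → C.G i ≤ N) → N = ⊤)
    (ρ : GradedLCAModule C M) (hfg : ρ.toLCAModule.FG)
    (hinf : ∀ r : ℕ, ∃ v : Fin r → M, polyIndep ρ.DM v) :
    ((d : ℝ≥0∞))⁻¹ ≤ ρ.eM := by
  obtain ⟨s, hs⟩ := hfg
  obtain ⟨n₀, hn₀⟩ := EMProof.exists_seg_finset ρ s
  have hP : ∀ k n : ℕ, n₀ + k * d ≤ n →
      ∃ v : Fin k → M, (∀ j, v j ∈ ρ.seg n) ∧ polyIndep ρ.DM v := by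
    intro k
    induction k with
    | zero => intro n _; exact ⟨Fin.elim0, fun j => j.elim0, fun q _ j => j.elim0⟩
    | succ k ih =>
      intro n hn
      have hn' : n₀ + k * d + d ≤ n := by rw [add_mul] at hn; omega
      obtain ⟨n', rfl⟩ : ∃ n', n = n' + d := ⟨n - d, by omega⟩
      exact EMProof.step d hgen ρ s hs hinf n'
        (hn₀.trans (EMProof.seg_mono ρ (by omega))) k (ih n' (by omega))
  have hrank : ∀ k n : ℕ, n₀ + k * d ≤ n → (k : ℕ∞) ≤ polyRank ρ.DM (ρ.seg n) := by
    intro k n hn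
    exact le_iSup₂_of_le (f := fun (r : ℕ) (_ : r ∈ {r : ℕ | ∃ v : Fin r → M,
      (∀ k, v k ∈ ρ.seg n) ∧ polyIndep ρ.DM v}) => (r : ℕ∞)) k (hP k n hn) le_rfl
  have hdpos : (0 : ℝ) < d := by exact_mod_cast hd
  have hlim : Filter.Tendsto (fun n : ℕ => ENNReal.ofReal ((d : ℝ)⁻¹ - ((n₀ + d : ℝ) / d) / n))
      Filter.atTop (nhds ((d : ℝ≥0∞))⁻¹) := by
    have h1 : Filter.Tendsto (fun n : ℕ => (d : ℝ)⁻¹ - ((n₀ + d : ℝ) / d) / n)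
      Filter.atTop (nhds ((d : ℝ)⁻¹ - 0)) :=
      tendsto_const_nhds.sub (tendsto_const_div_atTop_nhds_zero_nat _)
    have h2 := ENNReal.tendsto_ofReal h1
    rwa [sub_zero, ENNReal.ofReal_inv_of_pos hdpos, ENNReal.ofReal_natCast] at h2
  rw [← hlim.liminf_eq]
  refine Filter.liminf_le_liminf ?_
  filter_upwards [Filter.eventually_ge_atTop (n₀ + 1)] with n hn
  have hnpos : (0 : ℝ) < n := by exact_mod_cast (by omega : 0 < n)
  set k := (n - n₀) / d with hk
  have hkd : k * d ≤ n - n₀ := Nat.div_mul_le_self _ _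
  have hkd2 : n < n₀ + (k * d + d) := by
    have := Nat.lt_div_mul_add (a := n - n₀) (b := d) hd
    rw [← hk] at this
    omega
  have hr := hrank k n (by omega)
  have hr' : (k : ℝ≥0∞) ≤ (polyRank ρ.DM (ρ.seg n) : ℝ≥0∞) := by
    have := ENat.toENNReal_le.mpr hr
    simpa using this
  refine le_trans ?_ (ENNReal.div_le_div_right hr' _)
  rw [← ENNReal.ofReal_natCast k, ← ENNReal.ofReal_natCast n, ← ENNReal.ofReal_div_of_pos hnpos]
  apply ENNReal.ofReal_le_ofReal
  have hR : (n : ℝ) < n₀ + (k * d + d) := by exact_mod_cast hkd2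
  have e : (d : ℝ)⁻¹ - ((n₀ + d : ℝ) / d) / n = ((n - n₀ - d) / d) / n := by
    field_simp
    ring
  rw [e]
  gcongr
  rw [div_le_iff₀ hdpos]
  linarith
end
end

section
/- Let L = ⊕_{i∈ℤ} L_i be a ℤ-graded Lie conformal algebra, let S ⊆ ℤ, and set 𝒮 = ⊕_{i∈S} L_i and 𝒮⊥ = ⊕_{i∉S} L_i. If [𝒮_λ 𝒮⊥] ⊆ 𝒮⊥, then 𝒮⊥ + [𝒮⊥_λ 𝒮⊥] is an ideal of L. If moreover L is simple graded and 𝒮⊥ ≠ 0, then L = 𝒮⊥ + [𝒮⊥_λ 𝒮⊥] and 𝒮 ⊆ [𝒮⊥_λ 𝒮⊥]. -/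
open scoped BigOperators Classical ENNReal
open Polynomial

noncomputable section

/-- for `S ⊆ ℤ`, `𝒮 = ⊕_{i ∈ S} Lᵢ`, `𝒮⊥ = ⊕_{i ∉ S} Lᵢ`, if
`[𝒮_λ 𝒮⊥] ⊆ 𝒮⊥` then `𝒮⊥ + [𝒮⊥_λ 𝒮⊥]` is an ideal of `L`; if moreover `L` is
simple graded and `𝒮⊥ ≠ 0` then `L = 𝒮⊥ + [𝒮⊥_λ 𝒮⊥]` and `𝒮 ⊆ [𝒮⊥_λ 𝒮⊥]`. -/
theorem orthogonal_complement_ideal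
    {L : Type} [AddCommGroup L] [Module ℂ L] (C : GradedLCA L) (S : Set ℤ)
    (hcl : ∀ n : ℕ, ∀ a ∈ (⨆ i ∈ S, C.G i : Submodule ℂ L),
      ∀ b ∈ (⨆ i ∈ Sᶜ, C.G i : Submodule ℂ L),
        C.prd n a b ∈ (⨆ i ∈ Sᶜ, C.G i : Submodule ℂ L)) :
    C.toLieConformalAlgebra.IsIdeal
      ((⨆ i ∈ Sᶜ, C.G i) ⊔
        C.toLieConformalAlgebra.bspan (⨆ i ∈ Sᶜ, C.G i) (⨆ i ∈ Sᶜ, C.G i)) ∧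
    (C.IsSimpleGraded → (⨆ i ∈ Sᶜ, C.G i : Submodule ℂ L) ≠ ⊥ →
      ((⨆ i ∈ Sᶜ, C.G i) ⊔
          C.toLieConformalAlgebra.bspan (⨆ i ∈ Sᶜ, C.G i) (⨆ i ∈ Sᶜ, C.G i) = ⊤ ∧
        (⨆ i ∈ S, C.G i) ≤
          C.toLieConformalAlgebra.bspan (⨆ i ∈ Sᶜ, C.G i) (⨆ i ∈ Sᶜ, C.G i))) := by
  set U : Set L := ⨆ i ∈ Sᶜ, (C.G i : Set L) with hU
  set P : Submodule ℂ L := ⨆ i ∈ Sᶜ, C.G i with hP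
  set T : Submodule ℂ L := ⨆ i ∈ S, C.G i with hT
  have hUmem : ∀ x, x ∈ U ↔ ∃ i ∈ Sᶜ, x ∈ C.G i := by
    intro x
    simp [hU]
  have hGP : ∀ i ∈ Sᶜ, C.G i ≤ P := fun i hi => le_iSup₂_of_le i hi le_rfl
  have hGT : ∀ i ∈ S, C.G i ≤ T := fun i hi => le_iSup₂_of_le i hi le_rfl
  have hUP : ∀ x ∈ U, x ∈ P := by
    intro x hx
    obtain ⟨i, hi, hx⟩ := (hUmem x).1 hx
    exact hGP i hi hx
  have hPle : ∀ Q : Submodule ℂ L, (∀ x ∈ U, x ∈ Q) → P ≤ Q := by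
    intro Q hQ
    exact iSup₂_le fun i hi x hx => hQ x ((hUmem x).2 ⟨i, hi, hx⟩)
  set B : Submodule ℂ L := C.toLieConformalAlgebra.bspan U U with hB
  have hBU : ∀ n, ∀ u ∈ U, ∀ w ∈ U, C.prd n u w ∈ B := fun n u hu w hw =>
    Submodule.subset_span ⟨n, u, w, hu, hw, rfl⟩
  have hBle : ∀ Q : Submodule ℂ L, (∀ n, ∀ u ∈ U, ∀ w ∈ U, C.prd n u w ∈ Q) → B ≤ Q := by
    intro Q hQ
    refine Submodule.span_le.2 ?_
    rintro x ⟨n, u, w, hu, hw, rfl⟩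
    exact hQ n u hu w hw
  have hBP : ∀ n, ∀ u ∈ P, ∀ w ∈ P, C.prd n u w ∈ B := by
    intro n u hu w hw
    have h1 : ∀ u ∈ U, P ≤ B.comap (C.prd n u) := fun u hu => hPle _ fun w hw => hBU n u hu w hw
    have h2 : P ≤ B.comap ((C.prd n).flip w) := hPle _ fun u hu => h1 u hu hw
    exact h2 hu
  have hDP : ∀ x ∈ P, C.D x ∈ P := by
    have : P ≤ P.comap C.D := by
      refine hPle _ fun x hx => ?_
      obtain ⟨i, hi, hx⟩ := (hUmem x).1 hx
      exact hGP i hi (C.dGrade i x hx)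
    exact fun x hx => this hx
  have hDPk : ∀ (k : ℕ), ∀ x ∈ P, (⇑C.D)^[k] x ∈ P := by
    intro k
    induction k with
    | zero => exact fun x hx => hx
    | succ k ih =>
      intro x hx
      rw [Function.iterate_succ_apply]
      exact ih _ (hDP x hx)
  have hDB : ∀ x ∈ B, C.D x ∈ B := by
    have : B ≤ B.comap C.D := by
      refine hBle _ fun n u hu w hw => ?_
      have h := C.sesq' n u w
      have h' : C.D (C.prd n u w) = C.prd n u (C.D w) - (n : ℂ) • C.prd (n - 1) u w := by
        rw [h]; abel
      rw [Submodule.mem_comap, h']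
      exact B.sub_mem (hBP n u (hUP u hu) _ (hDP w (hUP w hw)))
        (B.smul_mem _ (hBU _ u hu w hw))
    exact fun x hx => this hx
  have hskew : ∀ n, ∀ a ∈ P, ∀ s ∈ T, C.prd n a s ∈ P := by
    intro n a ha s hs
    rw [C.skew n a s]
    refine P.neg_mem (finsum_induction (· ∈ P) P.zero_mem (fun _ _ => P.add_mem) fun j => ?_)
    exact P.smul_mem _ (hDPk _ _ (hcl _ s hs a ha))
  have htop : T ⊔ P = ⊤ := by
    rw [eq_top_iff, ← C.internal.submodule_iSup_eq_top]
    refine iSup_le fun i => ?_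
    by_cases hi : i ∈ S
    · exact (hGT i hi).trans le_sup_left
    · exact (hGP i hi).trans le_sup_right
  have hdec : ∀ x : L, ∃ s ∈ T, ∃ p ∈ P, s + p = x := fun x =>
    Submodule.mem_sup.1 (htop ▸ Submodule.mem_top)
  have hideal : C.toLieConformalAlgebra.IsIdeal (P ⊔ B) := by
    refine ⟨?_, ?_⟩
    · intro x hx
      obtain ⟨p, hp, b, hb, rfl⟩ := Submodule.mem_sup.1 hx
      rw [map_add]
      exact Submodule.add_mem_sup (hDP p hp) (hDB b hb)
    · intro n a b hb
      obtain ⟨s, hs, p, hp, rfl⟩ := hdec a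
      rw [map_add, LinearMap.add_apply]
      refine Submodule.add_mem _ ?_ ?_
      · obtain ⟨q, hq, c, hc, rfl⟩ := Submodule.mem_sup.1 hb
        rw [map_add]
        refine Submodule.add_mem_sup (hcl n s hs q hq) ?_
        have : B ≤ B.comap (C.prd n s) := by
          refine hBle _ fun m u hu w hw => ?_
          have h := sub_eq_iff_eq_add.1 (C.jacobi n m s u w)
          rw [Submodule.mem_comap, h]
          refine B.add_mem (B.sum_mem fun j _ => B.smul_mem _ ?_) ?_
          · exact hBP _ _ (hcl j s hs u (hUP u hu)) w (hUP w hw)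
          · exact hBP _ u (hUP u hu) _ (hcl n s hs w (hUP w hw))
        exact this hc
      · obtain ⟨t, ht, q, hq, rfl⟩ := hdec b
        rw [map_add]
        exact Submodule.add_mem_sup (hskew n p hp t ht) (hBP n p hp q hq)
  refine ⟨hideal, fun hsimp hne => ?_⟩
  have hBgr : B ≤ ⨆ i : ℤ, B ⊓ C.G i := by
    refine hBle _ fun n u hu w hw => ?_
    obtain ⟨i, hi, hui⟩ := (hUmem u).1 hu
    obtain ⟨j, hj, hwj⟩ := (hUmem w).1 hw
    exact Submodule.mem_iSup_of_mem (i + j) ⟨hBU n u hu w hw, C.prdGrade i j n u hui w hwj⟩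
  have hJtop : P ⊔ B = ⊤ := by
    refine (hsimp.2 (P ⊔ B) ⟨hideal, le_antisymm (iSup_le fun i => inf_le_left) ?_⟩).resolve_left ?_
    · refine sup_le ?_ (hBgr.trans (iSup_mono fun i => inf_le_inf_right _ le_sup_right))
      refine iSup₂_le fun i hi => ?_
      exact (le_inf ((hGP i hi).trans le_sup_left) le_rfl).trans
        (le_iSup (fun i => (P ⊔ B) ⊓ C.G i) i)
    · intro h
      exact hne (eq_bot_iff.2 (h ▸ le_sup_left))
  refine ⟨hJtop, ?_⟩
  have hB2 : B ≤ P ⊔ (B ⊓ T) := by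
    refine hBgr.trans (iSup_le fun i => ?_)
    by_cases hi : i ∈ S
    · exact (inf_le_inf_left _ (hGT i hi)).trans le_sup_right
    · exact inf_le_right.trans ((hGP i hi).trans le_sup_left)
  have hdisj : Disjoint T P :=
    C.internal.submodule_iSupIndep.disjoint_biSup_biSup disjoint_compl_right
  intro x hx
  have hx' : x ∈ P ⊔ (B ⊓ T) := by
    have : P ⊔ B ≤ P ⊔ (B ⊓ T) := sup_le le_sup_left hB2
    exact this (hJtop ▸ Submodule.mem_top)
  obtain ⟨p, hp, q, hq, rfl⟩ := Submodule.mem_sup.1 hx'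
  have hpT : p ∈ T := by
    have := T.sub_mem hx hq.2
    simpa using this
  have hp0 : p = 0 := Submodule.disjoint_def.1 hdisj p hpT hp
  rw [hp0, zero_add]
  exact hq.1
end
end
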